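/- arXiv:1708.08714 — 6 statements merged into one kernel-verified Lean document; each statement's English description precedes it below -/
import Mathlib

section
/- Let K be a finite geometric simplicial complex in ℝ^d whose space Q = |K| is convex with nonempty interior and which is pure d-dimensional, let V be its vertex set, ω : V → ℝ, and let g = g_{K,ω} be the piecewise-linear interpolant. Then g is concave on Q if and only if for every pair of faces σ = {a₁,…,a_{d+1}} and σ' = {a₂,…,a_{d+2}} of K, each with d+1 elements and sharing the d elements a₂,…,a_{d+1}, the affine function h : ℝ^d → ℝ that agrees with g on convexHull ℝ σ satisfies h(a_{d+2}) ≥ ω(a_{d+2}). -/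
/-!
If `g` agrees with an affine `h` on a full-dimensional simplex, then `g - h` has a local maximum
there, which is global when `g` is concave; this gives the wall inequalities.

Conversely, let `z` be an interior point of `|K|` lying on no face of codimension at least two.
Small opposite displacements `z ± w` lie in full-dimensional simplices containing `z`; these share
a face of codimension at most one, so the wall inequality gives `g (z - w) + g (z + w) ≤ 2 * g z`.
For fixed `y ∈ |K|` and all `x` outside countably many proper affine subspaces, the segment from
`x` to `y` meets codimension two only at `y`. On such a segment `g` is continuous and locally
midpoint concave, hence concave by a minimum principle. These `x` are dense, and the inequality
passes to the limit.
-/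

open Set Filter Topology Module Geometry

section AffineMap

lemma affineMap_sub_add_affineMap_add {E : Type*} [AddCommGroup E] [Module ℝ E] (h : E →ᵃ[ℝ] ℝ)
    (z w : E) : h (z - w) + h (z + w) = 2 * h z := by
  rw [h.decomp]
  simp only [Pi.add_apply, map_sub, map_add]
  ring

lemma affineMap_le_of_mem_convexHull {E : Type*} [AddCommGroup E] [Module ℝ E] {s : Set E}
    {h₁ h₂ : E →ᵃ[ℝ] ℝ} (hle : ∀ v ∈ s, h₁ v ≤ h₂ v) {x : E} (hx : x ∈ convexHull ℝ s) :
    h₁ x ≤ h₂ x := by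
  have hsub : convexHull ℝ s ⊆ (h₂ - h₁) ⁻¹' Ici 0 :=
    convexHull_min (fun v hv ↦ sub_nonneg.2 (hle v hv)) ((convex_Ici 0).affine_preimage _)
  exact sub_nonneg.1 (hsub hx)

lemma le_affineMap_of_concaveOn_of_eventuallyEq {E : Type*} [AddCommGroup E] [TopologicalSpace E]
    [Module ℝ E] [IsTopologicalAddGroup E] [ContinuousSMul ℝ E] {s : Set E} {f : E → ℝ}
    (hf : ConcaveOn ℝ s f) {h : E →ᵃ[ℝ] ℝ} {x : E} (hx : x ∈ s) (hfh : f =ᶠ[𝓝 x] h) {y : E}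
    (hy : y ∈ s) : f y ≤ h y := by
  have hconv : ConvexOn ℝ s h :=
    ((convexOn_id convex_univ).comp_affineMap h).subset (subset_univ s) hf.1
  have hloc : IsLocalMaxOn (f - ⇑h) s x := by
    filter_upwards [hfh.filter_mono nhdsWithin_le_nhds] with z hz
    simp [hz, hfh.eq_of_nhds]
  have hmax := IsMaxOn.of_isLocalMaxOn_of_concaveOn hx hloc (hf.sub hconv) hy
  simpa [hfh.eq_of_nhds] using hmax

end AffineMap

section MidpointConcave

variable {E F : Type*} [AddCommGroup E] [TopologicalSpace E] [AddCommGroup F] [TopologicalSpace F]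

/-- Local midpoint concavity of `f` at `z`: only the sufficiently short segments whose midpoint is
`z` itself are tested. It is the local form of concavity used to glue along segments. -/
def MidpointConcaveAt (f : E → ℝ) (z : E) : Prop :=
  ∀ᶠ w in 𝓝 0, f (z - w) + f (z + w) ≤ 2 * f z

lemma MidpointConcaveAt.sub_affineMap [Module ℝ E] {f : E → ℝ} {z : E}
    (hf : MidpointConcaveAt f z) (h : E →ᵃ[ℝ] ℝ) :
    MidpointConcaveAt (fun x ↦ f x - h x) z := by
  filter_upwards [hf] with w hw
  linarith [affineMap_sub_add_affineMap_add h z w]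

lemma MidpointConcaveAt.comp_affineMap [Module ℝ E] [Module ℝ F] [IsTopologicalAddGroup E]
    [IsTopologicalAddGroup F] {f : E → ℝ} {φ : F →ᵃ[ℝ] E} {z : F}
    (hf : MidpointConcaveAt f (φ z)) (hφ : Continuous φ) : MidpointConcaveAt (f ∘ φ) z := by
  have hlin : Tendsto φ.linear (𝓝 0) (𝓝 0) := by
    simpa using (AffineMap.continuous_linear_iff.2 hφ).tendsto 0
  filter_upwards [hlin.eventually hf] with w hw
  have hadd : φ (z + w) = φ z + φ.linear w := by
    simpa [add_comm] using φ.map_vadd z w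
  have hsub : φ (z - w) = φ z - φ.linear w := by
    simpa [sub_eq_neg_add] using φ.map_vadd z (-w)
  simpa [hadd, hsub] using hw

/-- If the minimum were negative, the midpoint inequality would fail at the last minimizer. -/
lemma nonneg_of_midpointConcaveAt {f : ℝ → ℝ} {a b : ℝ} (hf : ContinuousOn f (Icc a b))
    (hmid : ∀ t ∈ Ioo a b, MidpointConcaveAt f t) (ha : 0 ≤ f a) (hb : 0 ≤ f b) :
    ∀ t ∈ Icc a b, 0 ≤ f t := by
  intro t ht
  obtain ⟨m, hm, hmin⟩ := isCompact_Icc.exists_isMinOn ⟨t, ht⟩ hf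
  refine le_trans ?_ (hmin ht)
  by_contra! hneg
  have hcompact : IsCompact (Icc a b ∩ f ⁻¹' {f m}) :=
    isCompact_Icc.of_isClosed_subset
      (hf.preimage_isClosed_of_isClosed isClosed_Icc isClosed_singleton) inter_subset_left
  obtain ⟨s, ⟨hs, hsm : f s = f m⟩, hlast⟩ := hcompact.exists_isGreatest ⟨m, hm, rfl⟩
  have hsI : s ∈ Ioo a b :=
    ⟨hs.1.lt_of_ne (by rintro rfl; linarith), hs.2.lt_of_ne (by rintro rfl; linarith)⟩
  have hsub : ∀ᶠ δ in 𝓝 (0 : ℝ), s - δ ∈ Icc a b :=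
    (continuous_sub_left s).continuousAt.eventually_mem (by simpa using Icc_mem_nhds hsI.1 hsI.2)
  have hadd : ∀ᶠ δ in 𝓝 (0 : ℝ), s + δ ∈ Icc a b :=
    (continuous_const_add s).continuousAt.eventually_mem (by simpa using Icc_mem_nhds hsI.1 hsI.2)
  obtain ⟨δ, ⟨hδ, hl, hr⟩, hδ0 : 0 < δ⟩ :=
    (((hmid s hsI).and (hsub.and hadd)).filter_mono nhdsWithin_le_nhds |>.and
      (self_mem_nhdsWithin (s := Ioi 0))).exists
  have hfr : f (s + δ) ≠ f m := fun h ↦ by linarith [hlast ⟨hr, h⟩]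
  have hfr_lt : f m < f (s + δ) := lt_of_le_of_ne (hmin hr) hfr.symm
  have hfl_le : f m ≤ f (s - δ) := hmin hl
  linarith

lemma lineMap_le_of_midpointConcaveAt [Module ℝ E] [IsTopologicalAddGroup E] [ContinuousSMul ℝ E]
    {f : E → ℝ} {x y : E} (hf : ContinuousOn f (segment ℝ x y))
    (hmid : ∀ z ∈ openSegment ℝ x y, MidpointConcaveAt f z) {t : ℝ} (ht : t ∈ Icc 0 1) :
    AffineMap.lineMap (f x) (f y) t ≤ f (AffineMap.lineMap x y t) := by
  have hline : Continuous (AffineMap.lineMap (k := ℝ) x y) := AffineMap.lineMap_continuous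
  have hchord : Continuous (AffineMap.lineMap (k := ℝ) (f x) (f y)) := AffineMap.lineMap_continuous
  have hcont : ContinuousOn (fun s ↦ f (AffineMap.lineMap x y s) - AffineMap.lineMap (f x) (f y) s)
      (Icc (0 : ℝ) 1) :=
    (hf.comp hline.continuousOn fun s hs ↦ lineMap_mem_segment ℝ x y hs).sub hchord.continuousOn
  have hgap := nonneg_of_midpointConcaveAt hcont
    (fun s hs ↦ ((hmid _ (lineMap_mem_openSegment ℝ x y hs)).comp_affineMap hline).sub_affineMap _)
    (by simp) (by simp) t ht
  exact sub_nonneg.1 hgap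

end MidpointConcave

section AffineSubspace

lemma left_mem_of_lineMap_mem {k V P : Type*} [Field k] [AddCommGroup V] [Module k V]
    [AddTorsor V P] {S : AffineSubspace k P} {x y : P} {t : k} (ht : t ≠ 1) (hy : y ∈ S)
    (hxy : AffineMap.lineMap x y t ∈ S) : x ∈ S := by
  have hdir : (1 - t) • (x -ᵥ y) ∈ S.direction := by
    simpa [AffineMap.lineMap_vsub_right] using S.vsub_mem_direction hxy hy
  rw [S.direction.smul_mem_iff (sub_ne_zero.2 ht.symm)] at hdir
  simpa using AffineSubspace.vadd_mem_of_mem_direction hdir hy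

lemma affineSpan_ne_top_of_card_le_finrank {k V : Type*} [DivisionRing k] [AddCommGroup V]
    [Module k V] [FiniteDimensional k V] {s : Finset V} (hs : s.card ≤ finrank k V) :
    affineSpan k (s : Set V) ≠ ⊤ := by
  intro htop
  obtain ⟨t, hts, hspan, hind⟩ := exists_affineIndependent k V (s : Set V)
  have : Fintype t := (s.finite_toSet.subset hts).fintype
  have hcard : Fintype.card t = finrank k V + 1 :=
    hind.affineSpan_eq_top_iff_card_eq_finrank_add_one.1 (by simpa [hspan] using htop)
  have hle : Fintype.card t ≤ s.card := by
    simpa using Set.card_le_card hts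
  omega

variable {E : Type*} [NormedAddCommGroup E] [NormedSpace ℝ E]

lemma dense_compl_affineSubspace {S : AffineSubspace ℝ E} (hS : S ≠ ⊤) : Dense (S : Set E)ᶜ := by
  rw [← interior_eq_empty_iff_dense_compl, ← not_nonempty_iff_eq_empty]
  intro hne
  refine hS (top_unique ?_)
  rw [← isOpen_interior.affineSpan_eq_top hne, affineSpan_le]
  exact interior_subset

lemma dense_biInter_compl_affineSubspace [FiniteDimensional ℝ E] {ι : Type*} {I : Set ι}
    (hI : I.Countable) {S : ι → AffineSubspace ℝ E} (hS : ∀ i ∈ I, S i ≠ ⊤) :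
    Dense (⋂ i ∈ I, (S i : Set E)ᶜ) := by
  have : CompleteSpace E := FiniteDimensional.complete ℝ E
  exact dense_biInter_of_isOpen
    (fun i _ ↦ (S i).closed_of_finiteDimensional.isOpen_compl) hI
    fun i hi ↦ dense_compl_affineSubspace (hS i hi)

end AffineSubspace

section SimplicialComplex

/-- The simplicial complex `K` is locally finite as a family of closed simplices in the ambient
space. -/
def IsLocallyFinite {E : Type*} [AddCommGroup E] [Module ℝ E] [TopologicalSpace E]
    (K : SimplicialComplex ℝ E) : Prop :=
  LocallyFinite fun σ : K.faces ↦ convexHull ℝ (σ.1 : Set E)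

lemma isLocallyFinite_of_finite {E : Type*} [AddCommGroup E] [Module ℝ E] [TopologicalSpace E]
    {K : SimplicialComplex ℝ E} (hK : K.faces.Finite) : IsLocallyFinite K :=
  have : Finite K.faces := hK
  locallyFinite_of_finite _

/-- `K` is pure `d`-dimensional: its maximal faces are `d`-simplices, that is, they have `d + 1`
vertices. -/
def IsPureOfDim {E : Type*} [AddCommGroup E] [Module ℝ E] (K : SimplicialComplex ℝ E) (d : ℕ) :
    Prop :=
  ∀ σ ∈ K.faces, ∃ τ ∈ K.faces, σ ⊆ τ ∧ τ.card = d + 1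

/-- `g` is the piecewise-linear interpolant `g_{K,ω}` of the weight `ω` on the vertices of `K`.
Nothing is required of `g` outside `K.space`, nor of `ω` outside `K.vertices`. -/
structure IsInterpolant {E : Type*} [AddCommGroup E] [Module ℝ E] (K : SimplicialComplex ℝ E)
    (ω g : E → ℝ) : Prop where
  exists_affineMap : ∀ σ ∈ K.faces, ∃ h : E →ᵃ[ℝ] ℝ, ∀ x ∈ convexHull ℝ (σ : Set E), g x = h x
  eq_weight : ∀ v ∈ K.vertices, g v = ω v

/-- The local concavity criterion: across every wall, i.e. common facet of two adjacent
`d`-simplices `σ` and `σ'`, the affine extension of `g` from `σ` dominates the weight at the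
remaining vertex of `σ'`. -/
def IsConcaveAcrossWalls {E : Type*} [AddCommGroup E] [Module ℝ E] [DecidableEq E]
    (K : SimplicialComplex ℝ E) (d : ℕ) (ω g : E → ℝ) : Prop :=
  ∀ σ ∈ K.faces, ∀ σ' ∈ K.faces, σ.card = d + 1 → σ'.card = d + 1 → (σ ∩ σ').card = d →
    ∀ h : E →ᵃ[ℝ] ℝ, (∀ x ∈ convexHull ℝ (σ : Set E), g x = h x) →
      ∀ b ∈ σ', b ∉ σ → ω b ≤ h b

variable {E : Type*} [AddCommGroup E] [Module ℝ E] {K : SimplicialComplex ℝ E} {ω g : E → ℝ}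

lemma mem_vertices_of_mem_face {σ : Finset E} (hσ : σ ∈ K.faces) {v : E} (hv : v ∈ σ) :
    v ∈ K.vertices :=
  K.down_closed hσ (Finset.singleton_subset_iff.2 hv) (Finset.singleton_nonempty v)

lemma IsPureOfDim.exists_mem_convexHull {d : ℕ} (hK : IsPureOfDim K d) {x : E}
    (hx : x ∈ K.space) :
    ∃ σ ∈ K.faces, σ.card = d + 1 ∧ x ∈ convexHull ℝ (σ : Set E) := by
  obtain ⟨ρ, hρ, hxρ⟩ := SimplicialComplex.mem_space_iff.1 hx
  obtain ⟨σ, hσ, hρσ, hcard⟩ := hK ρ hρ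
  exact ⟨σ, hσ, hcard, convexHull_mono (Finset.coe_subset.2 hρσ) hxρ⟩

lemma inter_mem_faces_and_mem_convexHull_inter [DecidableEq E] {σ τ : Finset E} (hσ : σ ∈ K.faces)
    (hτ : τ ∈ K.faces) {z : E} (hzσ : z ∈ convexHull ℝ (σ : Set E))
    (hzτ : z ∈ convexHull ℝ (τ : Set E)) :
    σ ∩ τ ∈ K.faces ∧ z ∈ convexHull ℝ ((σ ∩ τ : Finset E) : Set E) := by
  have hz : z ∈ convexHull ℝ ((σ ∩ τ : Finset E) : Set E) := by
    rw [Finset.coe_inter]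
    exact K.inter_subset_convexHull hσ hτ ⟨hzσ, hzτ⟩
  have hne : (σ ∩ τ).Nonempty := by
    rw [← Finset.coe_nonempty, ← convexHull_nonempty_iff (𝕜 := ℝ)]
    exact ⟨z, hz⟩
  exact ⟨K.down_closed hσ Finset.inter_subset_left hne, hz⟩

lemma IsConcaveAcrossWalls.le_affineMap [DecidableEq E] {d : ℕ}
    (hwall : IsConcaveAcrossWalls K d ω g) (hg : IsInterpolant K ω g) {σ τ : Finset E}
    (hσ : σ ∈ K.faces) (hτ : τ ∈ K.faces) (hσc : σ.card = d + 1) (hτc : τ.card = d + 1)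
    (hinter : d ≤ (σ ∩ τ).card) {h : E →ᵃ[ℝ] ℝ}
    (hh : ∀ x ∈ convexHull ℝ (σ : Set E), g x = h x) {x : E}
    (hx : x ∈ convexHull ℝ (τ : Set E)) : g x ≤ h x := by
  obtain ⟨k, hk⟩ := hg.exists_affineMap τ hτ
  rw [hk x hx]
  refine affineMap_le_of_mem_convexHull (fun v (hv : v ∈ τ) ↦ ?_) hx
  rw [← hk v (subset_convexHull ℝ _ hv)]
  by_cases hvσ : v ∈ σ
  · exact (hh v (subset_convexHull ℝ _ hvσ)).le
  · have hlt : (σ ∩ τ).card < τ.card :=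
      Finset.card_lt_card ⟨Finset.inter_subset_right, fun hsub ↦
        hvσ (Finset.mem_of_mem_inter_left (hsub hv))⟩
    rw [hg.eq_weight v (mem_vertices_of_mem_face hτ hv)]
    exact hwall σ hσ τ hτ hσc hτc (by omega) h hh v hv hvσ

/-- The points from which `y` is reached without meeting codimension two before `y`: those `x` for
which no face with fewer than `finrank ℝ E` vertices has `x` in its affine join with `y`. -/
def genericSources (K : SimplicialComplex ℝ E) (y : E) : Set E :=
  ⋂ F ∈ {F ∈ K.faces | F.card < finrank ℝ E}, (affineSpan ℝ (insert y (F : Set E)) : Set E)ᶜ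

lemma lineMap_notMem_convexHull_of_mem_genericSources {x y : E} (hx : x ∈ genericSources K y)
    {t : ℝ} (ht : t ≠ 1) {F : Finset E} (hF : F ∈ K.faces) (hcard : F.card < finrank ℝ E) :
    AffineMap.lineMap x y t ∉ convexHull ℝ (F : Set E) := by
  intro hmem
  refine mem_iInter₂.1 hx F ⟨hF, hcard⟩ (left_mem_of_lineMap_mem (y := y) ht ?_ ?_)
  · exact subset_affineSpan ℝ _ (mem_insert y _)
  · exact affineSpan_mono ℝ (subset_insert y _) (convexHull_subset_affineSpan _ hmem)

end SimplicialComplex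

section LocallyFinite

variable {E : Type*} [NormedAddCommGroup E] [NormedSpace ℝ E] {K : SimplicialComplex ℝ E}
  {ω g : E → ℝ}

lemma IsLocallyFinite.eventually_mem_convexHull_imp (hK : IsLocallyFinite K) (z : E) :
    ∀ᶠ p in 𝓝 z, ∀ σ ∈ K.faces, p ∈ convexHull ℝ (σ : Set E) → z ∈ convexHull ℝ (σ : Set E) := by
  filter_upwards [hK.eventually_subset (fun σ ↦ σ.1.finite_toSet.isClosed_convexHull ℝ) z]
    with p hp σ hσ hpσ
  exact hp (a := ⟨σ, hσ⟩) hpσ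

lemma eventually_exists_common_simplex {d : ℕ} (hlf : IsLocallyFinite K) (hpure : IsPureOfDim K d)
    {z : E} (hz : z ∈ interior K.space) :
    ∀ᶠ p in 𝓝 z, ∃ σ ∈ K.faces, σ.card = d + 1 ∧
      z ∈ convexHull ℝ (σ : Set E) ∧ p ∈ convexHull ℝ (σ : Set E) := by
  filter_upwards [hlf.eventually_mem_convexHull_imp z, mem_interior_iff_mem_nhds.1 hz] with p hp hpK
  obtain ⟨σ, hσ, hcard, hpσ⟩ := hpure.exists_mem_convexHull hpK
  exact ⟨σ, hσ, hcard, hp σ hσ hpσ, hpσ⟩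

lemma IsConcaveAcrossWalls.midpointConcaveAt [DecidableEq E] {d : ℕ}
    (hwall : IsConcaveAcrossWalls K d ω g) (hg : IsInterpolant K ω g) (hlf : IsLocallyFinite K)
    (hpure : IsPureOfDim K d) {z : E} (hz : z ∈ interior K.space)
    (hcodim : ∀ F ∈ K.faces, F.card < d → z ∉ convexHull ℝ (F : Set E)) :
    MidpointConcaveAt g z := by
  have hev := eventually_exists_common_simplex hlf hpure hz
  have hadd : Tendsto (fun w : E ↦ z + w) (𝓝 0) (𝓝 z) := by
    simpa using (continuous_const_add z).tendsto 0
  have hsub : Tendsto (fun w : E ↦ z - w) (𝓝 0) (𝓝 z) := by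
    simpa using (continuous_sub_left z).tendsto 0
  filter_upwards [hadd.eventually hev, hsub.eventually hev]
    with w ⟨σ, hσ, hσc, hzσ, hwσ⟩ ⟨τ, hτ, hτc, hzτ, hwτ⟩
  obtain ⟨hface, hzinter⟩ := inter_mem_faces_and_mem_convexHull_inter hσ hτ hzσ hzτ
  have hinter : d ≤ (σ ∩ τ).card := not_lt.1 fun hlt ↦ hcodim _ hface hlt hzinter
  obtain ⟨h, hh⟩ := hg.exists_affineMap σ hσ
  calc g (z - w) + g (z + w)
      ≤ h (z - w) + h (z + w) :=
        add_le_add (hwall.le_affineMap hg hσ hτ hσc hτc hinter hh hwτ) (hh _ hwσ).le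
    _ = 2 * g z := by rw [affineMap_sub_add_affineMap_add, hh z hzσ]

variable [FiniteDimensional ℝ E]

lemma IsLocallyFinite.countable_faces (hK : IsLocallyFinite K) : K.faces.Countable := by
  have := FiniteDimensional.proper_real E
  rw [← countable_coe_iff, ← countable_univ_iff]
  exact hK.countable_univ fun σ ↦
    convexHull_nonempty_iff.2 (SimplicialComplex.nonempty_of_mem_faces σ.2)

lemma IsInterpolant.continuousOn (hg : IsInterpolant K ω g) (hK : IsLocallyFinite K) :
    ContinuousOn g K.space := by
  rw [SimplicialComplex.space, biUnion_eq_iUnion]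
  refine hK.continuousOn_iUnion (fun σ ↦ σ.1.finite_toSet.isClosed_convexHull ℝ) fun σ ↦ ?_
  obtain ⟨h, hh⟩ := hg.exists_affineMap σ σ.2
  exact h.continuous_of_finiteDimensional.continuousOn.congr hh

lemma interior_convexHull_nonempty_of_mem_faces {σ : Finset E} (hσ : σ ∈ K.faces)
    (hcard : σ.card = finrank ℝ E + 1) : (interior (convexHull ℝ (σ : Set E))).Nonempty := by
  rw [interior_convexHull_nonempty_iff_affineSpan_eq_top]
  simpa using (K.indep hσ).affineSpan_eq_top_iff_card_eq_finrank_add_one.2 (by simp [hcard])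

lemma IsPureOfDim.space_subset_closure_interior (hK : IsPureOfDim K (finrank ℝ E)) :
    K.space ⊆ closure (interior K.space) := by
  intro x hx
  obtain ⟨σ, hσ, hcard, hxσ⟩ := hK.exists_mem_convexHull hx
  have hclosure := Convex.closure_interior_eq_closure_of_nonempty_interior
    (convex_convexHull ℝ (σ : Set E)) (interior_convexHull_nonempty_of_mem_faces hσ hcard)
  exact closure_mono (interior_mono (SimplicialComplex.convexHull_subset_space hσ))
    (hclosure ▸ subset_closure hxσ)

lemma IsLocallyFinite.dense_genericSources (hK : IsLocallyFinite K) (y : E) :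
    Dense (genericSources K y) := by
  classical
  refine dense_biInter_compl_affineSubspace (hK.countable_faces.mono (sep_subset _ _)) ?_
  rintro F ⟨-, hF⟩
  rw [← Finset.coe_insert]
  exact affineSpan_ne_top_of_card_le_finrank ((Finset.card_insert_le y F).trans hF)

lemma IsConcaveAcrossWalls.lineMap_le_of_mem_genericSources [DecidableEq E]
    (hwall : IsConcaveAcrossWalls K (finrank ℝ E) ω g) (hg : IsInterpolant K ω g)
    (hlf : IsLocallyFinite K) (hconv : Convex ℝ K.space) (hpure : IsPureOfDim K (finrank ℝ E))
    {x y : E} (hx : x ∈ interior K.space) (hgen : x ∈ genericSources K y) (hy : y ∈ K.space)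
    {t : ℝ} (ht : t ∈ Icc 0 1) :
    AffineMap.lineMap (g x) (g y) t ≤ g (AffineMap.lineMap x y t) := by
  refine lineMap_le_of_midpointConcaveAt
    ((hg.continuousOn hlf).mono (hconv.segment_subset (interior_subset hx) hy)) ?_ ht
  intro z hz
  have hzK := hconv.openSegment_interior_self_subset_interior hx hy hz
  rw [openSegment_eq_image_lineMap] at hz
  obtain ⟨s, hs, rfl⟩ := hz
  exact hwall.midpointConcaveAt hg hlf hpure hzK fun F hF hcard ↦
    lineMap_notMem_convexHull_of_mem_genericSources hgen hs.2.ne hF hcard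

lemma IsConcaveAcrossWalls.concaveOn [DecidableEq E]
    (hwall : IsConcaveAcrossWalls K (finrank ℝ E) ω g) (hg : IsInterpolant K ω g)
    (hlf : IsLocallyFinite K) (hconv : Convex ℝ K.space) (hpure : IsPureOfDim K (finrank ℝ E)) :
    ConcaveOn ℝ K.space g := by
  refine ⟨hconv, fun x hx y hy a t ha ht hat ↦ ?_⟩
  obtain rfl : a = 1 - t := by linarith
  have htI : t ∈ Icc (0 : ℝ) 1 := ⟨ht, by linarith⟩
  have hdense : x ∈ closure (interior K.space ∩ genericSources K y) :=
    closure_minimal ((hlf.dense_genericSources y).open_subset_closure_inter isOpen_interior)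
      isClosed_closure (hpure.space_subset_closure_interior hx)
  have hcont : ContinuousOn g K.space := hg.continuousOn hlf
  have hleft : ContinuousWithinAt (fun x' ↦ (1 - t) • g x' + t • g y) K.space x :=
    ((hcont x hx).const_smul (1 - t)).add continuousWithinAt_const
  have hright : ContinuousWithinAt (fun x' ↦ g ((1 - t) • x' + t • y)) K.space x :=
    (hcont _ (hconv hx hy ha ht hat)).comp (f := fun x' ↦ (1 - t) • x' + t • y)
      (by fun_prop) fun x' hx' ↦ hconv hx' hy ha ht hat
  have hsub : interior K.space ∩ genericSources K y ⊆ K.space :=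
    inter_subset_left.trans interior_subset
  refine ContinuousWithinAt.closure_le hdense (hleft.mono hsub) (hright.mono hsub) ?_
  rintro x' ⟨hx', hgen⟩
  simpa only [AffineMap.lineMap_apply_module] using
    hwall.lineMap_le_of_mem_genericSources hg hlf hconv hpure hx' hgen hy htI

lemma IsInterpolant.isConcaveAcrossWalls [DecidableEq E] (hg : IsInterpolant K ω g)
    (hconc : ConcaveOn ℝ K.space g) : IsConcaveAcrossWalls K (finrank ℝ E) ω g := by
  intro σ hσ σ' hσ' hcard _ _ h hh b hb _
  obtain ⟨x, hx⟩ := interior_convexHull_nonempty_of_mem_faces hσ hcard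
  have hgh : g =ᶠ[𝓝 x] h := by
    filter_upwards [mem_interior_iff_mem_nhds.1 hx] using hh
  rw [← hg.eq_weight b (mem_vertices_of_mem_face hσ' hb)]
  exact le_affineMap_of_concaveOn_of_eventuallyEq hconc
    (SimplicialComplex.convexHull_subset_space hσ (interior_subset hx)) hgh
    (SimplicialComplex.subset_space hσ' hb)

theorem stmt4_general [DecidableEq E] {d : ℕ} (hd : finrank ℝ E = d) (hlf : IsLocallyFinite K)
    (hconv : Convex ℝ K.space) (hpure : IsPureOfDim K d) (hg : IsInterpolant K ω g) :
    ConcaveOn ℝ K.space g ↔ IsConcaveAcrossWalls K d ω g := by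
  subst hd
  exact ⟨hg.isConcaveAcrossWalls, fun hwall ↦ hwall.concaveOn hg hlf hconv hpure⟩

end LocallyFinite

/-- Let `K` be a finite geometric simplicial complex in `ℝ^d` whose space
`Q = |K|` is convex with nonempty interior, pure `d`-dimensional, `ω` a weight on the
vertices, and `g` the piecewise-linear interpolant of `ω` (characterized by the two
hypotheses `hg`, `hgω`). Then `g` is concave on `Q` iff for every pair of `(d+1)`-element
faces `σ, σ'` sharing `d` elements, the affine function `h` agreeing with `g` on
`convexHull ℝ σ` satisfies `h b ≥ ω b` for the remaining vertex `b` of `σ'`. -/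
theorem stmt4 (d : ℕ) (K : Geometry.SimplicialComplex ℝ (Fin d → ℝ))
    (hfin : K.faces.Finite)
    (hconv : Convex ℝ K.space) (hint : (interior K.space).Nonempty)
    (hpure : ∀ σ ∈ K.faces, ∃ τ ∈ K.faces, σ ⊆ τ ∧ τ.card = d + 1)
    (ω : (Fin d → ℝ) → ℝ) (g : (Fin d → ℝ) → ℝ)
    (hg : ∀ σ ∈ K.faces, ∃ h : (Fin d → ℝ) →ᵃ[ℝ] ℝ,
      ∀ x ∈ convexHull ℝ (σ : Set (Fin d → ℝ)), g x = h x)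
    (hgω : ∀ v ∈ K.vertices, g v = ω v) :
    ConcaveOn ℝ K.space g ↔
      ∀ σ ∈ K.faces, ∀ σ' ∈ K.faces, σ.card = d + 1 → σ'.card = d + 1 →
        (σ ∩ σ').card = d →
        ∀ h : (Fin d → ℝ) →ᵃ[ℝ] ℝ,
          (∀ x ∈ convexHull ℝ (σ : Set (Fin d → ℝ)), g x = h x) →
          ∀ b ∈ σ', b ∉ σ → ω b ≤ h b := by
  exact stmt4_general (finrank_fin_fun ℝ) (isLocallyFinite_of_finite hfin) hconv hpure ⟨hg, hgω⟩
end

section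
/- Let K be a finite geometric simplicial complex in ℝ^d whose space Q = |K| is convex with nonempty interior and which is pure d-dimensional, with vertex set V. Then the secondary cone C(K) = {ω ∈ ℝ^V : g_{K,ω} is concave on Q} equals the set of all ω ∈ ℝ^V satisfying, for every ordered pair of faces {a₁,…,a_{d+1}} and {a₂,…,a_{d+2}} of K with d+1 elements each, sharing the d elements a₂,…,a_{d+1}, and such that det of the (d+1)×(d+1) matrix with columns (a_i,1) for i = 1,…,d+1 is positive, the linear inequality det[(a_i, 1, ω(a_i))_{i=1,…,d+2}] ≤ 0 (a (d+2)×(d+2) determinant). In particular, C(K) is a closed convex cone that is the intersection of finitely many closed linear half-spaces of ℝ^V. -/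
/-!
A function that is affine on each simplex is concave on `|K|` if and only if it is *locally*
concave: for adjacent `d`-simplices `σ`, `τ`, the affine extension `h_σ` of `g` from `σ` satisfies
`g v ≤ h_σ v` at the apex `v` of `τ`. If `g` is concave, this inequality follows from concavity on
a short segment through the barycentre of the common facet, in the direction of `v`. Conversely, it
suffices that `g ≤ h_σ` on `|K|` for every `d`-simplex `σ`, since `g` is then a minimum of affine
functions. Along a segment from a generic point of `σ` to `x`, which crosses the simplices only
through relative interiors of facets, the values `h_τ x` for the simplices `τ` met cannot increase,
and the last of them is `g x`.

Row reduction gives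
`det [(aᵢ, 1, ω aᵢ)] = det [(aᵢ, 1)]_{i ≤ d+1} · (ω a_{d+2} - h_σ a_{d+2})`, so the determinant
inequalities are the local conditions on positively ordered pairs. The apices of `σ` and `τ` lie on
opposite sides of the common facet, so exchanging them turns a negatively ordered pair into a
positively ordered one, and the local conditions at the two apices are equivalent.
-/

namespace SecondaryCone

open Set Filter Topology Module
open scoped Finset
open Geometry (SimplicialComplex)

section AffineGeometry

variable {E : Type*} [AddCommGroup E] [Module ℝ E]

lemma eqOn_convexHull {f g : E →ᵃ[ℝ] ℝ} {S : Set E} (h : EqOn f g S) :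
    EqOn f g (convexHull ℝ S) :=
  (AffineMap.eqOn_affineSpan h).mono (convexHull_subset_affineSpan S)

lemma exists_affineBasis_coe_eq [FiniteDimensional ℝ E] {s : Finset E}
    (hs : AffineIndependent ℝ ((↑) : s → E)) (hcard : #s = finrank ℝ E + 1) :
    ∃ b : AffineBasis s ℝ E, ⇑b = (↑) :=
  ⟨⟨(↑), hs, hs.affineSpan_eq_top_iff_card_eq_finrank_add_one.2 (by simpa using hcard)⟩, rfl⟩

lemma affineSpan_ne_top_of_card_le_finrank [FiniteDimensional ℝ E] {s : Finset E}
    (hs : #s ≤ finrank ℝ E) : affineSpan ℝ (s : Set E) ≠ ⊤ := by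
  classical
  intro hspan
  have hne : s.Nonempty := by
    rw [Finset.nonempty_iff_ne_empty]
    rintro rfl
    simp at hspan
  obtain ⟨n, hn⟩ := Nat.exists_eq_succ_of_ne_zero hne.card_pos.ne'
  have hrank := finrank_vectorSpan_image_finset_le ℝ (id : E → E) s hn
  rw [Finset.image_id, ← direction_affineSpan, hspan, AffineSubspace.direction_top,
    finrank_top] at hrank
  omega

lemma exists_affineMap_eqOn [FiniteDimensional ℝ E] {s : Set E}
    (hs : AffineIndependent ℝ ((↑) : s → E)) (f : E → ℝ) : ∃ h : E →ᵃ[ℝ] ℝ, EqOn f h s := by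
  classical
  obtain ⟨t, hst, ht, htop⟩ := exists_subset_affineIndependent_affineSpan_eq_top hs
  have : Finite t := finite_set_of_fin_dim_affineIndependent ℝ ht
  have : Fintype t := Fintype.ofFinite t
  let b : AffineBasis t ℝ E := ⟨(↑), ht, by simpa using htop⟩
  refine ⟨(Fintype.linearCombination ℝ fun i : t => f i).toAffineMap.comp b.coords, fun x hx => ?_⟩
  have hb : b ⟨x, hst hx⟩ = x := rfl
  conv_rhs => rw [← hb]
  simp [Fintype.linearCombination_apply, AffineBasis.coord_apply]

lemma eventually_lineMap_mem_convexHull {ι : Type*} [Finite ι] (b : AffineBasis ι ℝ E) {q z : E}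
    (h : ∀ i, 0 < b.coord i q ∨ b.coord i q = 0 ∧ 0 ≤ b.coord i z) :
    ∀ᶠ ε in 𝓝[>] (0 : ℝ), AffineMap.lineMap q z ε ∈ convexHull ℝ (range b) := by
  simp only [b.convexHull_eq_nonneg_coord, mem_ofPred_eq, AffineMap.apply_lineMap,
    eventually_all]
  intro i
  rcases h i with hq | ⟨hq, hz⟩
  · have hcont : Tendsto (AffineMap.lineMap (b.coord i q) (b.coord i z)) (𝓝[>] (0 : ℝ))
        (𝓝 (b.coord i q)) := by
      have := (AffineMap.lineMap_continuous (p := b.coord i q) (q := b.coord i z)).tendsto (0 : ℝ)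
      rw [AffineMap.lineMap_apply_zero] at this
      exact this.mono_left nhdsWithin_le_nhds
    filter_upwards [hcont.eventually_const_lt hq] with ε hε using hε.le
  · filter_upwards [self_mem_nhdsWithin] with ε hε
    simpa [hq, AffineMap.lineMap_apply] using mul_nonneg (le_of_lt hε) hz

lemma mem_convexHull_image_support {ι : Type*} [Finite ι] (b : AffineBasis ι ℝ E) {q : E}
    (hq : q ∈ convexHull ℝ (range b)) : q ∈ convexHull ℝ (b '' {i | b.coord i q ≠ 0}) := by
  classical
  have := Fintype.ofFinite ι
  rw [b.convexHull_eq_nonneg_coord] at hq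
  have hsum : ∑ i with b.coord i q ≠ 0, b.coord i q = 1 := by
    rw [Finset.sum_filter_ne_zero, b.sum_coord_apply_eq_one]
  have hcomb : ∑ i with b.coord i q ≠ 0, b.coord i q • b i = q := by
    conv_rhs => rw [← b.linear_combination_coord_eq_self q]
    exact Finset.sum_filter_of_ne fun i _ hi => (smul_ne_zero_iff.1 hi).1
  rw [← hcomb]
  refine (convex_convexHull ℝ _).sum_mem (fun i _ => hq i) hsum fun i hi => subset_convexHull ℝ _ ?_
  rw [hcomb]
  exact mem_image_of_mem b (Finset.mem_filter.1 hi).2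

/-- The relative interior of the simplex with vertex set `F`, described combinatorially: the points
of the simplex which lie on none of its proper faces. -/
def openSimplex (F : Set E) : Set E :=
  {q ∈ convexHull ℝ F | ∀ w ∈ F, q ∉ convexHull ℝ (F \ {w})}

lemma centroid_mem_openSimplex {F : Finset E} (hne : F.Nonempty)
    (hF : AffineIndependent ℝ ((↑) : F → E)) : F.centroid ℝ id ∈ openSimplex (F : Set E) := by
  refine ⟨F.centroid_mem_convexHull hne, fun w hw hmem => ?_⟩
  rw [← Finset.centroid_univ, Finset.centroid_def] at hmem
  have hF' : Nonempty F := hne.to_subtype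
  have hsum := Finset.univ.sum_centroidWeights_eq_one_of_nonempty ℝ
    (Finset.univ_nonempty (α := F))
  have himage : ((F : Set E) \ {w}) = ((↑) : F → E) '' {i | (i : E) ≠ w} := by
    ext x
    simp [and_comm]
  have hzero := hF.eq_zero_of_affineCombination_mem_affineSpan hsum
    (himage ▸ convexHull_subset_affineSpan _ hmem) (Finset.mem_univ ⟨w, hw⟩) (by simp)
  simp [hne.ne_empty] at hzero

lemma eventually_lineMap_mem_convexHull_of_openSimplex {ι : Type*} [Finite ι]
    (b : AffineBasis ι ℝ E) {i₀ : ι} {q z : E} (hq : q ∈ openSimplex (b '' {i₀}ᶜ))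
    (hz : 0 ≤ b.coord i₀ z) :
    ∀ᶠ ε in 𝓝[>] (0 : ℝ), AffineMap.lineMap q z ε ∈ convexHull ℝ (range b) := by
  have hqb : q ∈ convexHull ℝ (range b) := convexHull_mono (image_subset_range _ _) hq.1
  have hq₀ : b.coord i₀ q = 0 := by
    refine eqOn_convexHull (g := AffineMap.const ℝ E 0) ?_ hq.1
    rintro _ ⟨i, hi, rfl⟩
    exact b.coord_apply_ne (Ne.symm hi)
  refine eventually_lineMap_mem_convexHull b fun i => ?_
  by_cases hi : i = i₀
  · exact .inr (hi ▸ ⟨hq₀, hz⟩)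
  · have hnonneg : 0 ≤ b.coord i q := (b.convexHull_eq_nonneg_coord ▸ hqb :) i
    refine .inl (hnonneg.lt_of_ne' fun h0 => hq.2 (b i) (mem_image_of_mem b hi) ?_)
    refine convexHull_mono ?_ (mem_convexHull_image_support b hqb)
    rintro _ ⟨j, hj, rfl⟩
    exact ⟨mem_image_of_mem b fun h => hj (h ▸ hq₀), fun h => hj (b.ind.injective h ▸ h0)⟩

lemma affineMap_eq_smul_coord {ι : Type*} (b : AffineBasis ι ℝ E) {i₀ : ι} {ψ : E →ᵃ[ℝ] ℝ}
    (hψ : EqOn ψ 0 (b '' {i₀}ᶜ)) : ψ = ψ (b i₀) • b.coord i₀ := by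
  classical
  refine AffineMap.ext_on b.tot ?_
  rintro _ ⟨i, rfl⟩
  by_cases hi : i = i₀
  · simp [hi]
  · simpa [b.coord_apply_ne (Ne.symm hi)] using hψ (mem_image_of_mem b hi)

lemma eventually_lineMap_mem_convexHull_insert [FiniteDimensional ℝ E] [DecidableEq E]
    {F : Finset E} {v q z : E} (hind : AffineIndependent ℝ ((↑) : ↥(insert v F) → E))
    (hv : v ∉ F) (hcard : #F = finrank ℝ E) (hq : q ∈ openSimplex (F : Set E)) {ψ : E →ᵃ[ℝ] ℝ}
    (hF : EqOn ψ 0 F) (hψv : 0 < ψ v) (hψz : 0 ≤ ψ z) :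
    ∀ᶠ ε in 𝓝[>] (0 : ℝ),
      AffineMap.lineMap q z ε ∈ convexHull ℝ ((insert v F : Finset E) : Set E) := by
  obtain ⟨b, hb⟩ := exists_affineBasis_coe_eq hind (by rw [Finset.card_insert_of_notMem hv, hcard])
  let i₀ : ↥(insert v F) := ⟨v, Finset.mem_insert_self v F⟩
  have hrange : range b = (insert v F : Finset E) := by rw [hb, Subtype.range_coe]
  have hfacet : b '' {i₀}ᶜ = F := by
    rw [image_compl_eq_range_sdiff_image b.ind.injective, hrange, image_singleton, hb]
    simp [i₀, hv]
  have hψ := affineMap_eq_smul_coord b (hfacet ▸ hF)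
  rw [hψ, hb] at hψz
  rw [← hrange]
  exact eventually_lineMap_mem_convexHull_of_openSimplex b (hfacet ▸ hq)
    (nonneg_of_mul_nonneg_right hψz hψv)

end AffineGeometry

section FacetPairs

variable {E : Type*} [AddCommGroup E] [Module ℝ E] [DecidableEq E]

/-- Two adjacent full-dimensional simplices `insert u F` and `insert v F` of `K`, with common facet
`F` and distinct apices `u` and `v`. -/
structure IsFacetPair (K : SimplicialComplex ℝ E) (F : Finset E) (u v : E) : Prop where
  left_mem : insert u F ∈ K.faces
  right_mem : insert v F ∈ K.faces
  left_notMem : u ∉ F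
  right_notMem : v ∉ F
  ne : u ≠ v
  card_eq : #F = finrank ℝ E

namespace IsFacetPair

variable {K : SimplicialComplex ℝ E} {F : Finset E} {u v : E}

lemma symm (h : IsFacetPair K F u v) : IsFacetPair K F v u :=
  ⟨h.right_mem, h.left_mem, h.right_notMem, h.left_notMem, h.ne.symm, h.card_eq⟩

lemma mem_convexHull_facet (h : IsFacetPair K F u v) {x : E}
    (hu : x ∈ convexHull ℝ ((insert u F : Finset E) : Set E))
    (hv : x ∈ convexHull ℝ ((insert v F : Finset E) : Set E)) :
    x ∈ convexHull ℝ (F : Set E) := by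
  have hinter : insert u F ∩ insert v F = F := by
    rw [Finset.insert_inter_of_notMem (by simp [h.ne, h.left_notMem]),
      Finset.inter_insert_of_notMem h.right_notMem, Finset.inter_self]
  have hx := K.inter_subset_convexHull h.left_mem h.right_mem ⟨hu, hv⟩
  rwa [← Finset.coe_inter, hinter] at hx

variable [FiniteDimensional ℝ E]

lemma centroid_mem_openSimplex (h : IsFacetPair K F u v) :
    F.centroid ℝ id ∈ openSimplex (F : Set E) := by
  refine SecondaryCone.centroid_mem_openSimplex ?_
    ((K.indep h.left_mem).mono (by simp))
  by_contra hF
  have : Subsingleton E := by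
    rw [← finrank_zero_iff (R := ℝ), ← h.card_eq, Finset.not_nonempty_iff_eq_empty.1 hF,
      Finset.card_empty]
  exact h.ne (Subsingleton.elim u v)

lemma affineMap_ext (h : IsFacetPair K F u v) {f g : E →ᵃ[ℝ] ℝ}
    (hfg : EqOn f g (insert u F : Finset E)) : f = g := by
  obtain ⟨b, hb⟩ := exists_affineBasis_coe_eq (K.indep h.left_mem)
    (by rw [Finset.card_insert_of_notMem h.left_notMem, h.card_eq])
  refine AffineMap.ext_on b.tot ?_
  rwa [hb, Subtype.range_coe]

lemma exists_affineMap_pos (h : IsFacetPair K F u v) :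
    ∃ ψ : E →ᵃ[ℝ] ℝ, EqOn ψ 0 F ∧ 0 < ψ u := by
  obtain ⟨ψ, hψ⟩ := exists_affineMap_eqOn (K.indep h.left_mem) (Pi.single u 1)
  refine ⟨ψ, fun w hw => ?_, ?_⟩
  · rw [← hψ (by simp [Finset.mem_coe.1 hw]), Pi.single_eq_of_ne, Pi.zero_apply]
    exact ne_of_mem_of_not_mem hw h.left_notMem
  · simp [← hψ (x := u) (by simp)]

lemma apex_neg (h : IsFacetPair K F u v) {ψ : E →ᵃ[ℝ] ℝ} (hF : EqOn ψ 0 F) (hu : 0 < ψ u) :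
    ψ v < 0 := by
  by_contra! hv
  have hm := h.centroid_mem_openSimplex
  set m := F.centroid ℝ id
  have hψ0 : EqOn ψ 0 (convexHull ℝ (F : Set E)) :=
    eqOn_convexHull (g := AffineMap.const ℝ E 0) hF
  -- otherwise a short segment from `m` towards `v` lies in both simplices, but not in their facet
  obtain ⟨ε, hεu, hε0, hε1⟩ := ((eventually_lineMap_mem_convexHull_insert (K.indep h.left_mem)
    h.left_notMem h.card_eq hm hF hu hv).and (Ioo_mem_nhdsGT one_pos)).exists
  have hεv : AffineMap.lineMap m v ε ∈ convexHull ℝ ((insert v F : Finset E) : Set E) :=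
    (convex_convexHull ℝ _).lineMap_mem (convexHull_mono (by simp) hm.1)
      (subset_convexHull ℝ _ (by simp)) ⟨hε0.le, hε1.le⟩
  have hψv : ψ v = 0 := by
    have := hψ0 (h.mem_convexHull_facet hεu hεv)
    rw [AffineMap.apply_lineMap, hψ0 hm.1] at this
    simpa [AffineMap.lineMap_apply, hε0.ne'] using this
  have hψ : ψ = AffineMap.const ℝ E 0 := h.symm.affineMap_ext fun w hw => by
    obtain rfl | hw := Finset.mem_insert.1 hw
    exacts [hψv, hF hw]
  simp [hψ] at hu

lemma apex_nonneg (h : IsFacetPair K F u v) {ψ : E →ᵃ[ℝ] ℝ} (hF : EqOn ψ 0 F) (hu : ψ u ≤ 0) :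
    0 ≤ ψ v := by
  by_contra! hv
  have := h.symm.apex_neg (ψ := -ψ) (fun w hw => by simp [hF hw]) (by simpa using hv)
  exact hu.not_gt (neg_lt_zero.1 this)

lemma apex_le_symm (h : IsFacetPair K F u v) {g : E → ℝ} {fu fv : E →ᵃ[ℝ] ℝ}
    (hfu : EqOn g fu (insert u F : Finset E)) (hfv : EqOn g fv (insert v F : Finset E))
    (hle : g u ≤ fv u) : g v ≤ fu v := by
  have hF : EqOn (fu - fv) 0 F := fun w hw => by
    simp [← hfu (x := w) (by simp [Finset.mem_coe.1 hw]),
      ← hfv (x := w) (by simp [Finset.mem_coe.1 hw])]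
  have := h.apex_nonneg (ψ := fu - fv) hF (by simpa [← hfu (x := u) (by simp)] using hle)
  simpa [← hfv (x := v) (by simp)] using this

lemma exists_mem_openSegment (h : IsFacetPair K F u v) :
    ∃ q ∈ convexHull ℝ ((insert u F : Finset E) : Set E), ∃ m ∈ convexHull ℝ (F : Set E),
      m ∈ openSegment ℝ q v := by
  obtain ⟨ψ, hF, hψu⟩ := h.exists_affineMap_pos
  have hm := h.centroid_mem_openSimplex
  set m := F.centroid ℝ id
  have hψm : ψ m = 0 := eqOn_convexHull (g := AffineMap.const ℝ E 0) hF hm.1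
  let z : E := AffineMap.lineMap m v (-1 : ℝ)
  have hψz : 0 ≤ ψ z := by
    rw [AffineMap.apply_lineMap, hψm]
    simpa [AffineMap.lineMap_apply] using (h.apex_neg hF hψu).le
  obtain ⟨ε, hq, hε⟩ := ((eventually_lineMap_mem_convexHull_insert (K.indep h.left_mem)
    h.left_notMem h.card_eq hm hF hψu hψz).and self_mem_nhdsWithin).exists
  replace hε : 0 < ε := hε
  refine ⟨_, hq, m, hm.1, 1 / (1 + ε), ε / (1 + ε), by positivity, by positivity, ?_, ?_⟩
  · field_simp
  · simp only [z, AffineMap.lineMap_apply_module]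
    match_scalars <;> field_simp <;> ring

lemma apex_le_of_concaveOn (h : IsFacetPair K F u v) {g : E → ℝ} (hg : ConcaveOn ℝ K.space g)
    {f : E →ᵃ[ℝ] ℝ} (hf : EqOn g f (convexHull ℝ ((insert u F : Finset E) : Set E))) :
    g v ≤ f v := by
  obtain ⟨q, hq, _, hm, a, b, ha, hb, hab, rfl⟩ := h.exists_mem_openSegment
  have hv : v ∈ K.space :=
    K.convexHull_subset_space h.right_mem (subset_convexHull ℝ _ (by simp))
  have hconc := hg.2 (K.convexHull_subset_space h.left_mem hq) hv ha.le hb.le hab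
  rw [hf (convexHull_mono (by simp) hm), Convex.combo_affine_apply hab, hf hq] at hconc
  exact le_of_mul_le_mul_left (by simpa using hconc) hb

end IsFacetPair

end FacetPairs

section PiecewiseAffine

variable {E : Type*} [AddCommGroup E] [Module ℝ E] {K : SimplicialComplex ℝ E} {g : E → ℝ}

/-- `g` is affine on every simplex of `K`. Nothing is said about `g` outside `|K|`, so the
interpolant `g_{K,ω}` is any such `g` with the values `ω` at the vertices. -/
def IsPiecewiseAffine (K : SimplicialComplex ℝ E) (g : E → ℝ) : Prop :=
  ∀ σ ∈ K.faces, ∃ h : E →ᵃ[ℝ] ℝ, ∀ x ∈ convexHull ℝ (σ : Set E), g x = h x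

lemma IsPiecewiseAffine.eqOn_convexHull (hg : IsPiecewiseAffine K g) {σ : Finset E}
    (hσ : σ ∈ K.faces) {f : E →ᵃ[ℝ] ℝ} (hf : EqOn g f σ) : EqOn g f (convexHull ℝ (σ : Set E)) := by
  obtain ⟨h, hh⟩ := hg σ hσ
  have hfh : EqOn h f σ := fun w hw => (hh w (subset_convexHull ℝ _ hw)).symm.trans (hf hw)
  exact fun x hx => (hh x hx).trans (SecondaryCone.eqOn_convexHull hfh hx)

lemma exists_isPiecewiseAffine_eqOn_vertices [FiniteDimensional ℝ E] (K : SimplicialComplex ℝ E)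
    (f : E → ℝ) : ∃ g, IsPiecewiseAffine K g ∧ EqOn g f K.vertices := by
  choose! H hH using fun σ (hσ : σ ∈ K.faces) => exists_affineMap_eqOn (K.indep hσ) f
  have hcompat : ∀ σ ∈ K.faces, ∀ τ ∈ K.faces, ∀ x, x ∈ convexHull ℝ (σ : Set E) →
      x ∈ convexHull ℝ (τ : Set E) → H σ x = H τ x := fun σ hσ τ hτ x hxσ hxτ =>
    eqOn_convexHull (fun w hw => (hH σ hσ hw.1).symm.trans (hH τ hτ hw.2))
      (K.inter_subset_convexHull hσ hτ ⟨hxσ, hxτ⟩)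
  have hglue : ∀ x, ∃ y, ∀ σ ∈ K.faces, x ∈ convexHull ℝ (σ : Set E) → y = H σ x := by
    intro x
    by_cases hx : ∃ σ ∈ K.faces, x ∈ convexHull ℝ (σ : Set E)
    · obtain ⟨σ, hσ, hxσ⟩ := hx
      exact ⟨H σ x, fun τ hτ hxτ => hcompat σ hσ τ hτ x hxσ hxτ⟩
    · exact ⟨0, fun σ hσ hxσ => (hx ⟨σ, hσ, hxσ⟩).elim⟩
  choose g hg using hglue
  refine ⟨g, fun σ hσ => ⟨H σ, fun x hx => hg x σ hσ hx⟩, fun v hv => ?_⟩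
  rw [hg v {v} hv (subset_convexHull ℝ _ (by simp)), ← hH {v} hv (by simp)]

/-- At every facet pair `insert u F`, `insert v F`, the affine extension of `g` from `insert u F`
is at least `g` at the opposite apex `v`. -/
def IsLocallyConcave [DecidableEq E] (K : SimplicialComplex ℝ E) (g : E → ℝ) : Prop :=
  ∀ ⦃F u v⦄, IsFacetPair K F u v → ∀ f : E →ᵃ[ℝ] ℝ, EqOn g f (insert u F : Finset E) → g v ≤ f v

lemma IsPiecewiseAffine.isLocallyConcave_of_concaveOn [DecidableEq E] [FiniteDimensional ℝ E]
    (hg : IsPiecewiseAffine K g) (hconc : ConcaveOn ℝ K.space g) : IsLocallyConcave K g :=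
  fun _ _ _ h _ hf => h.apex_le_of_concaveOn hconc (hg.eqOn_convexHull h.left_mem hf)

end PiecewiseAffine

section GeneralPosition

variable {E : Type*} [AddCommGroup E] [Module ℝ E]

/-- `y` lies on no affine subspace spanned by at most `dim E` points of `A`. The open segment from
such a point to a point of `A` misses all simplices of codimension at least two with vertices in
`A`. -/
def InGeneralPosition (A : Set E) (y : E) : Prop :=
  ∀ S : Finset E, (S : Set E) ⊆ A → #S ≤ finrank ℝ E → y ∉ affineSpan ℝ (S : Set E)

lemma InGeneralPosition.lineMap_notMem_convexHull {A : Set E} {x y : E}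
    (hy : InGeneralPosition (insert x A) y) {S : Finset E} (hS : (S : Set E) ⊆ A)
    (hcard : #S < finrank ℝ E) {t : ℝ} (ht : t ≠ 1) :
    AffineMap.lineMap y x t ∉ convexHull ℝ (S : Set E) := by
  classical
  intro hmem
  refine hy (insert x S) ?_ ((Finset.card_insert_le x S).trans hcard) ?_
  · rw [Finset.coe_insert]
    exact insert_subset_insert hS
  · have hy_eq : y = AffineMap.lineMap x (AffineMap.lineMap y x t) (1 / (1 - t)) := by
      have : 1 - t ≠ 0 := sub_ne_zero.2 ht.symm
      simp only [AffineMap.lineMap_apply_module]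
      match_scalars <;> field_simp
      ring
    rw [hy_eq]
    refine AffineMap.lineMap_mem _ (subset_affineSpan ℝ _ (by simp)) ?_
    exact affineSpan_mono ℝ (by simp) (convexHull_subset_affineSpan _ hmem)

lemma exists_mem_inGeneralPosition {E : Type*} [NormedAddCommGroup E] [NormedSpace ℝ E]
    [FiniteDimensional ℝ E] {A : Set E} (hA : A.Finite) {U : Set E} (hU : (interior U).Nonempty) :
    ∃ y ∈ U, InGeneralPosition A y := by
  borelize E
  let 𝒮 : Set (Finset E) := {S | (S : Set E) ⊆ A ∧ #S ≤ finrank ℝ E}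
  have h𝒮 : 𝒮.Finite := by
    refine hA.toFinset.powerset.finite_toSet.subset fun S hS => ?_
    simpa using hS.1
  let μ : MeasureTheory.Measure E := MeasureTheory.Measure.addHaar
  have hnull : μ (⋃ S ∈ 𝒮, (affineSpan ℝ (S : Set E) : Set E)) = 0 :=
    (MeasureTheory.measure_biUnion_null_iff h𝒮.countable).2 fun S hS =>
      MeasureTheory.Measure.addHaar_affineSubspace _ _ (affineSpan_ne_top_of_card_le_finrank hS.2)
  by_contra! hcon
  refine (isOpen_interior.measure_pos μ hU).ne' (MeasureTheory.measure_mono_null ?_ hnull)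
  intro y hy
  have := hcon y (interior_subset hy)
  simp only [InGeneralPosition, not_forall, not_not] at this
  obtain ⟨S, hSA, hS, hyS⟩ := this
  exact mem_biUnion (x := S) ⟨hSA, hS⟩ hyS

end GeneralPosition

section Crossing

lemma exists_first_crossing {X ι : Type*} [TopologicalSpace X] {C : ι → Set X}
    (hC : ∀ i, IsClosed (C i)) {p : ℝ → X} (hp : Continuous p) {I J : Set ι} (hI : I.Finite)
    (hJ : J.Finite) {a b : ℝ} (hab : a ≤ b) (hcover : ∀ t ∈ Icc a b, ∃ i ∈ I ∪ J, p t ∈ C i)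
    (ha : ∀ j ∈ J, p a ∉ C j) (hb : ∃ j ∈ J, p b ∈ C j) :
    ∃ t ∈ Ioc a b, (∃ i ∈ I, p t ∈ C i) ∧ (∃ j ∈ J, p t ∈ C j) ∧
      ∀ s ∈ Ico a t, ∀ j ∈ J, p s ∉ C j := by
  let U (L : Set ι) : Set ℝ := p ⁻¹' ⋃ i ∈ L, C i
  have hU {L : Set ι} (hL : L.Finite) : IsClosed (U L) :=
    (hL.isClosed_biUnion fun i _ => hC i).preimage hp
  have hmem {L : Set ι} {t : ℝ} : t ∈ U L ↔ ∃ i ∈ L, p t ∈ C i := by simp [U]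
  obtain ⟨t, ⟨⟨hat, htb⟩, htJ⟩, hmin⟩ := (isCompact_Icc.inter_right (hU hJ)).exists_isLeast
    ⟨b, ⟨hab, le_rfl⟩, hmem.2 hb⟩
  have hbefore : ∀ s ∈ Ico a t, ∀ j ∈ J, p s ∉ C j := fun s hs j hj hsj =>
    (hmin ⟨⟨hs.1, hs.2.le.trans htb⟩, hmem.2 ⟨j, hj, hsj⟩⟩).not_gt hs.2
  obtain ⟨j, hj, htj⟩ := hmem.1 htJ
  have hat' : a < t := hat.lt_of_ne fun h => ha j hj (h ▸ htj)
  have hIco : Ico a t ⊆ U I := fun s hs => by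
    obtain ⟨i, hi | hi, hsi⟩ := hcover s ⟨hs.1, hs.2.le.trans htb⟩
    exacts [hmem.2 ⟨i, hi, hsi⟩, (hbefore s hs i hi hsi).elim]
  have htI : t ∈ U I := (hU hI).closure_subset_iff.2 hIco
    (by rw [closure_Ico hat'.ne]; exact right_mem_Icc.2 hat)
  exact ⟨t, ⟨hat', htb⟩, hmem.1 htI, ⟨j, hj, htj⟩, hbefore⟩

lemma card_inter_le_of_ne {α : Type*} [DecidableEq α] {s t : Finset α} {n : ℕ} (hs : #s = n + 1)
    (ht : #t = n + 1) (hne : s ≠ t) : #(s ∩ t) ≤ n := by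
  rw [← Nat.lt_add_one_iff, ← hs]
  refine Finset.card_lt_card (Finset.inter_subset_left.ssubset_of_ne fun h => hne ?_)
  exact Finset.eq_of_subset_of_card_le (Finset.inter_eq_left.1 h) (by rw [hs, ht])

variable {E : Type*} [AddCommGroup E] [Module ℝ E] {K : SimplicialComplex ℝ E}

lemma subset_vertices {σ : Finset E} (hσ : σ ∈ K.faces) : (σ : Set E) ⊆ K.vertices := by
  rw [SimplicialComplex.vertices_eq]
  exact subset_biUnion_of_mem (u := fun τ : Finset E => (τ : Set E)) hσ

lemma vertices_finite (hfin : K.faces.Finite) : K.vertices.Finite := by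
  rw [SimplicialComplex.vertices_eq]
  exact hfin.biUnion fun σ _ => σ.finite_toSet

variable [DecidableEq E]

lemma exists_isFacetPair {σ τ : Finset E} (hσ : σ ∈ K.faces) (hτ : τ ∈ K.faces)
    (hcσ : #σ = finrank ℝ E + 1) (hcτ : #τ = finrank ℝ E + 1) (hne : σ ≠ τ) {q : E}
    (hqσ : q ∈ convexHull ℝ (σ : Set E)) (hqτ : q ∈ convexHull ℝ (τ : Set E))
    (hq : ∀ S : Finset E, (S : Set E) ⊆ K.vertices → #S < finrank ℝ E →
      q ∉ convexHull ℝ (S : Set E)) :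
    ∃ F u v, σ = insert u F ∧ τ = insert v F ∧ IsFacetPair K F u v ∧
      q ∈ openSimplex (F : Set E) := by
  have hqF : q ∈ convexHull ℝ ((σ ∩ τ : Finset E) : Set E) := by
    rw [Finset.coe_inter]
    exact K.inter_subset_convexHull hσ hτ ⟨hqσ, hqτ⟩
  have hFV : ((σ ∩ τ : Finset E) : Set E) ⊆ K.vertices :=
    (Finset.coe_subset.2 Finset.inter_subset_left).trans (subset_vertices hσ)
  have hF : #(σ ∩ τ) = finrank ℝ E := by
    refine le_antisymm (card_inter_le_of_ne hcσ hcτ hne) ?_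
    by_contra! hlt
    exact hq _ hFV hlt hqF
  obtain ⟨u, hu, huσ⟩ := Finset.exists_eq_insert_iff.2
    ⟨Finset.inter_subset_left (s₁ := σ) (s₂ := τ), by rw [hF, hcσ]⟩
  obtain ⟨v, hv, hvτ⟩ := Finset.exists_eq_insert_iff.2
    ⟨Finset.inter_subset_right (s₁ := σ) (s₂ := τ), by rw [hF, hcτ]⟩
  refine ⟨σ ∩ τ, u, v, huσ.symm, hvτ.symm, ⟨?_, ?_, hu, hv, ?_, hF⟩, hqF, fun w hw => ?_⟩
  · rwa [huσ]
  · rwa [hvτ]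
  · rintro rfl
    exact hne (huσ.symm.trans hvτ)
  · rw [← Finset.coe_erase]
    refine hq _ ((Finset.coe_subset.2 (Finset.erase_subset _ _)).trans hFV) ?_
    exact (Finset.card_erase_lt_of_mem hw).trans_eq hF

lemma IsFacetPair.eventually_lineMap_mem [FiniteDimensional ℝ E] {F : Finset E} {u v : E}
    (h : IsFacetPair K F u v) {x y : E} {t : ℝ} (ht : t ∈ Ioo 0 1)
    (hq : AffineMap.lineMap y x t ∈ openSimplex (F : Set E)) {fu fv : E →ᵃ[ℝ] ℝ}
    (hF : EqOn fu fv F) (hv : fv v ≤ fu v) (hx : fu x < fv x) :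
    ∀ᶠ ε in 𝓝[>] (0 : ℝ), AffineMap.lineMap (AffineMap.lineMap y x t) y ε ∈
      convexHull ℝ ((insert v F : Finset E) : Set E) := by
  have hψF : EqOn (fu - fv) 0 F := fun w hw => by simp [hF hw]
  have hψv : 0 < (fu - fv) v := by
    refine sub_pos.2 (hv.lt_of_ne fun hv => hx.ne (congrArg (fun f : E →ᵃ[ℝ] ℝ => f x) ?_))
    refine h.symm.affineMap_ext fun w hw => ?_
    obtain rfl | hw := Finset.mem_insert.1 hw
    exacts [hv.symm, hF hw]
  have hψy : 0 ≤ (fu - fv) y := by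
    have hψq : (fu - fv) (AffineMap.lineMap y x t) = 0 :=
      eqOn_convexHull (g := AffineMap.const ℝ E 0) hψF hq.1
    rw [AffineMap.apply_lineMap, AffineMap.lineMap_apply_module, smul_eq_mul, smul_eq_mul] at hψq
    have hψx : (fu - fv) x < 0 := sub_neg.2 hx
    nlinarith [ht.1, ht.2]
  exact eventually_lineMap_mem_convexHull_insert (K.indep h.right_mem) h.right_notMem h.card_eq hq
    hψF hψv hψy

end Crossing

section LocalToGlobal

/-- `K` is pure of full dimension: every face lies in a face with `dim E + 1` vertices. -/
def IsPure {E : Type*} [AddCommGroup E] [Module ℝ E] (K : SimplicialComplex ℝ E) : Prop :=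
  ∀ σ ∈ K.faces, ∃ τ ∈ K.faces, σ ⊆ τ ∧ #τ = finrank ℝ E + 1

lemma IsPure.exists_mem_convexHull {E : Type*} [AddCommGroup E] [Module ℝ E]
    {K : SimplicialComplex ℝ E} (hpure : IsPure K) {x : E} (hx : x ∈ K.space) :
    ∃ τ ∈ K.faces, #τ = finrank ℝ E + 1 ∧ x ∈ convexHull ℝ (τ : Set E) := by
  obtain ⟨σ, hσ, hxσ⟩ := SimplicialComplex.mem_space_iff.1 hx
  obtain ⟨τ, hτ, hστ, hcτ⟩ := hpure σ hσ
  exact ⟨τ, hτ, hcτ, convexHull_mono (Finset.coe_subset.2 hστ) hxσ⟩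

variable {E : Type*} [NormedAddCommGroup E] [NormedSpace ℝ E] {K : SimplicialComplex ℝ E}

lemma exists_isFacetPair_first_crossing [DecidableEq E] (hfin : K.faces.Finite)
    (hconv : Convex ℝ K.space) (hpure : IsPure K) {x y : E} (hxK : x ∈ K.space)
    (hyK : y ∈ K.space) (hy : InGeneralPosition (insert x K.vertices) y) {P : Finset E → Prop}
    (hyP : ∀ τ ∈ K.faces, #τ = finrank ℝ E + 1 → P τ → y ∉ convexHull ℝ (τ : Set E))
    (hxP : ∀ τ ∈ K.faces, x ∈ convexHull ℝ (τ : Set E) → P τ) :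
    ∃ t ∈ Ioo (0 : ℝ) 1, ∃ F u v, IsFacetPair K F u v ∧ ¬ P (insert u F) ∧ P (insert v F) ∧
      AffineMap.lineMap y x t ∈ openSimplex (F : Set E) ∧
      ∀ s ∈ Ico 0 t, AffineMap.lineMap y x s ∉ convexHull ℝ ((insert v F : Finset E) : Set E) := by
  let facets : Set (Finset E) := {τ | τ ∈ K.faces ∧ #τ = finrank ℝ E + 1}
  have hfacets : facets.Finite := hfin.subset fun _ h => h.1
  have hcover : ∀ t ∈ Icc (0 : ℝ) 1, ∃ τ ∈ facets ∩ {τ | ¬ P τ} ∪ facets ∩ {τ | P τ},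
      AffineMap.lineMap y x t ∈ convexHull ℝ (τ : Set E) := by
    intro t ht
    obtain ⟨τ, hτ, hcτ, htτ⟩ := hpure.exists_mem_convexHull (hconv.lineMap_mem hyK hxK ht)
    exact ⟨τ, (em' (P τ)).imp (⟨⟨hτ, hcτ⟩, ·⟩) (⟨⟨hτ, hcτ⟩, ·⟩), htτ⟩
  have hend : ∃ τ ∈ facets ∩ {τ | P τ},
      AffineMap.lineMap y x (1 : ℝ) ∈ convexHull ℝ (τ : Set E) := by
    obtain ⟨τ, hτ, hcτ, hxτ⟩ := hpure.exists_mem_convexHull hxK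
    exact ⟨τ, ⟨⟨hτ, hcτ⟩, hxP τ hτ hxτ⟩, by simpa using hxτ⟩
  obtain ⟨t, ⟨ht0, ht1⟩, ⟨σ, ⟨⟨hσ, hcσ⟩, hPσ⟩, htσ⟩, ⟨τ, ⟨⟨hτ, hcτ⟩, hPτ⟩, htτ⟩, hfirst⟩ :=
    exists_first_crossing (fun τ : Finset E => (τ.finite_toSet.isCompact_convexHull ℝ).isClosed)
      AffineMap.lineMap_continuous (hfacets.inter_of_left _) (hfacets.inter_of_left _)
      zero_le_one hcover (fun τ hτ => by simpa using hyP τ hτ.1.1 hτ.1.2 hτ.2) hend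
  replace ht1 : t < 1 := ht1.lt_of_ne fun h => hPσ (hxP σ hσ (by simpa [h] using htσ))
  obtain ⟨F, u, v, rfl, rfl, hF, htF⟩ := exists_isFacetPair hσ hτ hcσ hcτ
    (fun h => hPσ (h ▸ hPτ)) htσ htτ fun S hSV hS => hy.lineMap_notMem_convexHull hSV hS ht1.ne
  exact ⟨t, ⟨ht0, ht1⟩, F, u, v, hF, hPσ, hPτ, htF,
    fun s hs => hfirst s hs _ ⟨⟨hτ, hcτ⟩, hPτ⟩⟩

variable [FiniteDimensional ℝ E]

lemma exists_inGeneralPosition_notMem (hfin : K.faces.Finite) {σ : Finset E} (hσ : σ ∈ K.faces)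
    (hcσ : #σ = finrank ℝ E + 1) (x : E) :
    ∃ y ∈ convexHull ℝ (σ : Set E), InGeneralPosition (insert x K.vertices) y ∧
      ∀ τ ∈ K.faces, #τ = finrank ℝ E + 1 → τ ≠ σ → y ∉ convexHull ℝ (τ : Set E) := by
  classical
  obtain ⟨b, hb⟩ := exists_affineBasis_coe_eq (K.indep hσ) hcσ
  have hσint : (interior (convexHull ℝ (σ : Set E))).Nonempty :=
    interior_convexHull_nonempty_iff_affineSpan_eq_top.2 (by simpa [hb] using b.tot)
  obtain ⟨y, hyσ, hy⟩ := exists_mem_inGeneralPosition ((vertices_finite hfin).insert x) hσint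
  refine ⟨y, hyσ, hy, fun τ hτ hcτ hne hyτ => ?_⟩
  refine hy (τ ∩ σ) ?_ (card_inter_le_of_ne hcτ hcσ hne) (convexHull_subset_affineSpan _ ?_)
  · exact (Finset.coe_subset.2 Finset.inter_subset_left).trans
      ((subset_vertices hτ).trans (subset_insert x _))
  · rw [Finset.coe_inter]
    exact K.inter_subset_convexHull hτ hσ ⟨hyτ, hyσ⟩

variable [DecidableEq E] {g : E → ℝ} {H : Finset E → E →ᵃ[ℝ] ℝ}

lemma IsLocallyConcave.le_affineMap (hloc : IsLocallyConcave K g) (hfin : K.faces.Finite)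
    (hconv : Convex ℝ K.space) (hpure : IsPure K)
    (hH : ∀ τ ∈ K.faces, EqOn g (H τ) (convexHull ℝ (τ : Set E))) {σ : Finset E}
    (hσ : σ ∈ K.faces) (hcσ : #σ = finrank ℝ E + 1) {x : E} (hx : x ∈ K.space) :
    g x ≤ H σ x := by
  by_contra! hlt
  obtain ⟨y, hyσ, hy, hy_notMem⟩ := exists_inGeneralPosition_notMem hfin hσ hcσ x
  obtain ⟨t, ht, F, u, v, hF, hu, hv, htF, hfirst⟩ := exists_isFacetPair_first_crossing hfin hconv
    hpure hx (K.convexHull_subset_space hσ hyσ) hy (P := fun τ => H σ x < H τ x)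
    (fun τ hτ hcτ hτx => hy_notMem τ hτ hcτ fun h => hτx.ne (h ▸ rfl))
    (fun τ hτ hxτ => hH τ hτ hxτ ▸ hlt)
  have hHu : EqOn g (H _) (insert u F : Finset E) :=
    (hH _ hF.left_mem).mono (subset_convexHull ℝ _)
  have hHv : EqOn g (H _) (insert v F : Finset E) :=
    (hH _ hF.right_mem).mono (subset_convexHull ℝ _)
  -- Going back from the crossing point towards `y` stays in `insert v F`, which is thus entered
  -- before the first crossing.
  obtain ⟨ε, hε, hε0, hε1⟩ := ((hF.eventually_lineMap_mem ht htF
    ((hHu.mono (by simp)).symm.trans (hHv.mono (by simp)))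
    (hHv (x := v) (by simp) ▸ hloc hF _ hHu) ((not_lt.1 hu).trans_lt hv)).and
    (Ioo_mem_nhdsGT one_pos)).exists
  rw [← AffineMap.lineMap_apply_one_sub, AffineMap.lineMap_lineMap_right] at hε
  have ht0 := ht.1
  exact hfirst _ ⟨by nlinarith, by nlinarith⟩ hε

theorem IsPiecewiseAffine.concaveOn_iff_isLocallyConcave (hg : IsPiecewiseAffine K g)
    (hfin : K.faces.Finite) (hconv : Convex ℝ K.space) (hpure : IsPure K) :
    ConcaveOn ℝ K.space g ↔ IsLocallyConcave K g := by
  refine ⟨hg.isLocallyConcave_of_concaveOn, fun hloc => ⟨hconv, fun x hx y hy a b ha hb hab => ?_⟩⟩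
  choose! H hH using hg
  -- `g` is the minimum of the affine functions `H τ`
  obtain ⟨τ, hτ, hcτ, hzτ⟩ := hpure.exists_mem_convexHull (hconv hx hy ha hb hab)
  have hle {z : E} (hz : z ∈ K.space) : g z ≤ H τ z :=
    hloc.le_affineMap hfin hconv hpure hH hτ hcτ hz
  rw [hH τ hτ _ hzτ, Convex.combo_affine_apply hab]
  exact add_le_add (smul_le_smul_of_nonneg_left (hle hx) ha)
    (smul_le_smul_of_nonneg_left (hle hy) hb)

end LocalToGlobal

section Determinants

variable {d : ℕ}

/-- The matrix with columns `(pⱼ, 1)`; the sign of its determinant is the orientation of `p`. -/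
def homMatrix (p : Fin (d + 1) → Fin d → ℝ) : Matrix (Fin (d + 1)) (Fin (d + 1)) ℝ :=
  Matrix.of fun i j => if h : (i : ℕ) < d then p j ⟨i, h⟩ else 1

/-- The matrix with columns `(aⱼ, 1, wⱼ)`, for points `aⱼ` lifted to the heights `wⱼ`. -/
def liftMatrix (a : Fin (d + 2) → Fin d → ℝ) (w : Fin (d + 2) → ℝ) :
    Matrix (Fin (d + 2)) (Fin (d + 2)) ℝ :=
  Matrix.of fun i j => if hi : (i : ℕ) < d then a j ⟨i, hi⟩ else if (i : ℕ) = d then 1 else w j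

lemma homMatrix_castSucc (p : Fin (d + 1) → Fin d → ℝ) (i : Fin d) (j : Fin (d + 1)) :
    homMatrix p i.castSucc j = p j i := by
  simp [homMatrix]

lemma homMatrix_last (p : Fin (d + 1) → Fin d → ℝ) (j : Fin (d + 1)) :
    homMatrix p (Fin.last d) j = 1 := by
  simp [homMatrix]

lemma liftMatrix_castSucc_castSucc (a : Fin (d + 2) → Fin d → ℝ) (w : Fin (d + 2) → ℝ)
    (i j : Fin (d + 1)) :
    liftMatrix a w i.castSucc j.castSucc = homMatrix (fun k => a k.castSucc) i j := by
  obtain h | h := (Nat.le_of_lt_succ i.isLt).lt_or_eq <;> simp [liftMatrix, homMatrix, h]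

lemma liftMatrix_last (a : Fin (d + 2) → Fin d → ℝ) (w : Fin (d + 2) → ℝ) :
    liftMatrix a w (Fin.last (d + 1)) = w := by
  ext j
  simp [liftMatrix]

lemma updateRow_last_liftMatrix (a : Fin (d + 2) → Fin d → ℝ) (w w' : Fin (d + 2) → ℝ) :
    (liftMatrix a w).updateRow (Fin.last (d + 1)) w' = liftMatrix a w' := by
  ext i j
  obtain ⟨i, rfl⟩ | rfl := i.eq_castSucc_or_eq_last
  · rw [Matrix.updateRow_ne (Fin.castSucc_lt_last i).ne]
    obtain h | h := (Nat.le_of_lt_succ i.isLt).lt_or_eq <;> simp [liftMatrix, h]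
  · rw [Matrix.updateRow_self, liftMatrix_last]

lemma det_liftMatrix_of_castSucc_eq_zero (a : Fin (d + 2) → Fin d → ℝ) {w : Fin (d + 2) → ℝ}
    (hw : ∀ i : Fin (d + 1), w i.castSucc = 0) :
    (liftMatrix a w).det = (homMatrix fun i => a i.castSucc).det * w (Fin.last (d + 1)) := by
  have hminor : (liftMatrix a w).submatrix (Fin.last (d + 1)).succAbove (Fin.last (d + 1)).succAbove
      = homMatrix fun i => a i.castSucc := by
    ext i j
    rw [Matrix.submatrix_apply, Fin.succAbove_last, liftMatrix_castSucc_castSucc]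
  rw [Matrix.det_succ_row _ (Fin.last (d + 1)), Fin.sum_univ_castSucc, liftMatrix_last, hminor]
  simp [hw, mul_comm]

lemma det_liftMatrix_sub_affineMap (a : Fin (d + 2) → Fin d → ℝ) (w : Fin (d + 2) → ℝ)
    (h : (Fin d → ℝ) →ᵃ[ℝ] ℝ) :
    (liftMatrix a fun j => w j - h (a j)).det = (liftMatrix a w).det := by
  obtain ⟨k, h_apply⟩ : ∃ k : Fin d → ℝ, ∀ x, h x = ∑ i, x i * k i + h 0 := by
    refine ⟨fun i => h.linear fun j => if i = j then 1 else 0, fun x => ?_⟩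
    rw [← add_zero x, ← vadd_eq_add, h.map_vadd, LinearMap.pi_apply_eq_sum_univ]
    simp
  -- the combination of the rows that subtracts the values of `h` from the last row
  let c : Fin (d + 2) → ℝ := Fin.snoc (Fin.snoc (-k) (-h 0) : Fin (d + 1) → ℝ) 1
  have hrow : ∑ i, c i • liftMatrix a w i = fun j => w j - h (a j) := by
    ext j
    rw [Finset.sum_apply, Fin.sum_univ_castSucc, Fin.sum_univ_castSucc, h_apply]
    simp [c, liftMatrix, mul_comm]
    ring
  have hdet := Matrix.det_updateRow_sum (liftMatrix a w) (Fin.last (d + 1)) c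
  have hc : c (Fin.last (d + 1)) = 1 := by simp [c]
  rwa [hrow, updateRow_last_liftMatrix, hc, one_smul] at hdet

lemma det_liftMatrix (a : Fin (d + 2) → Fin d → ℝ) (w : Fin (d + 2) → ℝ)
    (h : (Fin d → ℝ) →ᵃ[ℝ] ℝ) (hw : ∀ i : Fin (d + 1), w i.castSucc = h (a i.castSucc)) :
    (liftMatrix a w).det = (homMatrix fun i => a i.castSucc).det *
      (w (Fin.last (d + 1)) - h (a (Fin.last (d + 1)))) := by
  rw [← det_liftMatrix_sub_affineMap a w h,
    det_liftMatrix_of_castSucc_eq_zero a fun i => sub_eq_zero.2 (hw i)]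

lemma det_homMatrix_ne_zero {p : Fin (d + 1) → Fin d → ℝ} (hp : AffineIndependent ℝ p) :
    (homMatrix p).det ≠ 0 := by
  intro h0
  obtain ⟨w, hw, hpw⟩ := Matrix.exists_mulVec_eq_zero_iff.2 h0
  have hpw' (i) : ∑ j, homMatrix p i j * w j = 0 := congrFun hpw i
  refine hw (funext fun j => affineIndependent_iff.1 hp Finset.univ w ?_ ?_ j (Finset.mem_univ j))
  · simpa only [homMatrix_last, one_mul] using hpw' (Fin.last d)
  · ext i
    simpa [homMatrix_castSucc, mul_comm] using hpw' i.castSucc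

lemma exists_affineMap_eq_det_homMatrix_cons (f : Fin d → Fin d → ℝ) :
    ∃ ψ : (Fin d → ℝ) →ᵃ[ℝ] ℝ, ∀ x, ψ x = (homMatrix (Fin.cons x f)).det := by
  let c : Fin (d + 1) → ℝ := fun i =>
    (-1) ^ (i : ℕ) * ((homMatrix (Fin.cons 0 f)).submatrix i.succAbove Fin.succ).det
  refine ⟨(∑ i : Fin d, c i.castSucc • LinearMap.proj i).toAffineMap +
    AffineMap.const ℝ _ (c (Fin.last d)), fun x => ?_⟩
  have hminor (i : Fin (d + 1)) : (homMatrix (Fin.cons x f)).submatrix i.succAbove Fin.succ =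
      (homMatrix (Fin.cons 0 f)).submatrix i.succAbove Fin.succ := rfl
  simp_rw [Matrix.det_succ_column_zero, hminor, Fin.sum_univ_castSucc]
  simp [homMatrix_castSucc, homMatrix_last, c, mul_right_comm]

lemma det_homMatrix_cons_apply_eq_zero (f : Fin d → Fin d → ℝ) (i : Fin d) :
    (homMatrix (Fin.cons (f i) f)).det = 0 :=
  Matrix.det_zero_of_column_eq (Fin.succ_ne_zero i).symm fun k => by simp [homMatrix]

end Determinants

section FacetSequences

variable {α : Type*} {n : ℕ}

/-- The sequence `u, f₁, …, fₙ, v`: the vertices of two adjacent simplices, in the order in which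
they enter the determinant inequality, with the common facet in the middle. -/
def flank (u : α) (f : Fin n → α) (v : α) : Fin (n + 2) → α :=
  Fin.cons u (Fin.snoc f v : Fin (n + 1) → α)

lemma flank_castSucc (u : α) (f : Fin n → α) (v : α) (i : Fin (n + 1)) :
    flank u f v i.castSucc = (Fin.cons u f : Fin (n + 1) → α) i := by
  obtain rfl | ⟨i, rfl⟩ := i.eq_zero_or_eq_succ
  · rfl
  · rw [← Fin.succ_castSucc, flank, Fin.cons_succ, Fin.snoc_castSucc, Fin.cons_succ]

lemma flank_succ (u : α) (f : Fin n → α) (v : α) (i : Fin (n + 1)) :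
    flank u f v i.succ = (Fin.snoc f v : Fin (n + 1) → α) i := rfl

lemma flank_last (u : α) (f : Fin n → α) (v : α) : flank u f v (Fin.last (n + 1)) = v := by
  rw [← Fin.succ_last, flank_succ, Fin.snoc_last]

lemma exists_eq_flank (a : Fin (n + 2) → α) : ∃ u f v, a = flank u f v :=
  ⟨a 0, Fin.init (Fin.tail a), a (Fin.last (n + 1)), by
    rw [flank, ← Fin.cons_self_tail a, ← Fin.snoc_init_self (Fin.tail a)]
    simp⟩

lemma flank_injective_iff {u v : α} {f : Fin n → α} : Function.Injective (flank u f v) ↔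
    Function.Injective f ∧ u ∉ range f ∧ v ∉ range f ∧ u ≠ v := by
  rw [flank, Fin.cons_injective_iff, Fin.snoc_injective_iff, Fin.range_snoc, mem_insert_iff]
  tauto

variable [DecidableEq α]

lemma image_flank_castSucc (u : α) (f : Fin n → α) (v : α) :
    Finset.univ.image (fun i : Fin (n + 1) => flank u f v i.castSucc) =
      insert u (Finset.univ.image f) := by
  ext x
  simp [flank_castSucc, Fin.exists_fin_succ, eq_comm]

lemma image_flank_succ (u : α) (f : Fin n → α) (v : α) :
    Finset.univ.image (fun i : Fin (n + 1) => flank u f v i.succ) =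
      insert v (Finset.univ.image f) := by
  ext x
  simp [flank_succ, Fin.exists_fin_succ', eq_comm, or_comm]

lemma exists_image_univ_eq {F : Finset α} (hF : #F = n) :
    ∃ f : Fin n → α, Finset.univ.image f = F := by
  refine ⟨fun i => (F.equivFinOfCardEq hF).symm i, ?_⟩
  ext x
  simp only [Finset.mem_image, Finset.mem_univ, true_and]
  exact ⟨fun ⟨i, hi⟩ => hi ▸ Subtype.prop _, fun hx => ⟨F.equivFinOfCardEq hF ⟨x, hx⟩, by simp⟩⟩

lemma isFacetPair_image_iff {E : Type*} [AddCommGroup E] [Module ℝ E] [DecidableEq E]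
    (hn : finrank ℝ E = n) {K : SimplicialComplex ℝ E} {u v : E} {f : Fin n → E} :
    IsFacetPair K (Finset.univ.image f) u v ↔ Function.Injective (flank u f v) ∧
      insert u (Finset.univ.image f) ∈ K.faces ∧ insert v (Finset.univ.image f) ∈ K.faces := by
  have hcard : #(Finset.univ.image f) = finrank ℝ E ↔ Function.Injective f := by
    simpa [hn] using Finset.card_image_iff (s := Finset.univ) (f := f)
  have hmem (x : E) : x ∈ Finset.univ.image f ↔ x ∈ range f := by simp
  rw [flank_injective_iff, ← hcard]
  constructor
  · rintro ⟨hσ, hτ, hu, hv, huv, hF⟩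
    exact ⟨⟨hF, mt (hmem u).2 hu, mt (hmem v).2 hv, huv⟩, hσ, hτ⟩
  · rintro ⟨⟨hF, hu, hv, huv⟩, hσ, hτ⟩
    exact ⟨hσ, hτ, mt (hmem u).1 hu, mt (hmem v).1 hv, huv, hF⟩

end FacetSequences

section DeterminantInequalities

variable {d : ℕ} {K : SimplicialComplex ℝ (Fin d → ℝ)} {u v : Fin d → ℝ} {f : Fin d → Fin d → ℝ}

lemma IsFacetPair.det_homMatrix_cons_ne_zero (h : IsFacetPair K (Finset.univ.image f) u v) :
    (homMatrix (Fin.cons u f)).det ≠ 0 := by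
  have hinj : Function.Injective (flank u f v) :=
    ((isFacetPair_image_iff (finrank_fin_fun ℝ)).1 h).1
  have hcons : (Fin.cons u f : Fin (d + 1) → Fin d → ℝ) = fun i => flank u f v i.castSucc :=
    funext fun i => (flank_castSucc u f v i).symm
  have hrange : range (Fin.cons u f : Fin (d + 1) → Fin d → ℝ) =
      ((insert u (Finset.univ.image f) : Finset (Fin d → ℝ)) : Set (Fin d → ℝ)) := by
    simp [Fin.range_cons]
  refine det_homMatrix_ne_zero (AffineIndependent.of_set_of_injective ?_ ?_)
  · rw [hrange]
    exact K.indep h.left_mem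
  · rw [hcons]
    exact hinj.comp (Fin.castSucc_injective _)

lemma IsFacetPair.det_homMatrix_cons_pos_or (h : IsFacetPair K (Finset.univ.image f) u v) :
    0 < (homMatrix (Fin.cons u f)).det ∨ 0 < (homMatrix (Fin.cons v f)).det := by
  obtain ⟨ψ, hψ⟩ := exists_affineMap_eq_det_homMatrix_cons f
  have hF : EqOn ψ 0 (Finset.univ.image f) := by
    intro w hw
    obtain ⟨i, -, rfl⟩ := Finset.mem_image.1 hw
    rw [hψ, det_homMatrix_cons_apply_eq_zero, Pi.zero_apply]
  by_contra! hle
  rw [← hψ, ← hψ] at hle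
  refine h.det_homMatrix_cons_ne_zero ?_
  rw [← hψ]
  exact hle.1.antisymm (h.symm.apex_nonneg hF hle.2)

lemma det_liftMatrix_flank_nonpos_iff (hpos : 0 < (homMatrix (Fin.cons u f)).det)
    {g : (Fin d → ℝ) → ℝ} {φ : (Fin d → ℝ) →ᵃ[ℝ] ℝ}
    (hφ : EqOn g φ (insert u (Finset.univ.image f) : Finset (Fin d → ℝ))) :
    (liftMatrix (flank u f v) (g ∘ flank u f v)).det ≤ 0 ↔ g v ≤ φ v := by
  have hφ' (i : Fin (d + 1)) : (g ∘ flank u f v) i.castSucc = φ (flank u f v i.castSucc) := by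
    refine hφ ?_
    rw [← image_flank_castSucc u f v]
    exact Finset.mem_coe.2 (Finset.mem_image_of_mem _ (Finset.mem_univ i))
  rw [det_liftMatrix _ _ φ hφ']
  simp only [flank_castSucc, flank_last, Function.comp_apply]
  rw [← smul_eq_mul, smul_nonpos_iff_nonpos_of_pos_left hpos, sub_nonpos]

/-- The sequences `a₁, …, a_{d+2}` of vertices for which `a₁, …, a_{d+1}` and `a₂, …, a_{d+2}` span
`d`-simplices of `K`, the first of them positively oriented. -/
def orientedFacetSequences (K : SimplicialComplex ℝ (Fin d → ℝ)) :
    Set (Fin (d + 2) → K.vertices) :=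
  {a | Function.Injective a ∧
    Finset.univ.image (fun i : Fin (d + 1) => (a i.castSucc : Fin d → ℝ)) ∈ K.faces ∧
    Finset.univ.image (fun i : Fin (d + 1) => (a i.succ : Fin d → ℝ)) ∈ K.faces ∧
    0 < (homMatrix fun i => (a i.castSucc : Fin d → ℝ)).det}

/-- The determinant inequalities `det [(aᵢ, 1, ω aᵢ)] ≤ 0` on a height function `ω`, one for each
ordered pair of adjacent `d`-simplices with the first positively oriented. -/
def DetCond (K : SimplicialComplex ℝ (Fin d → ℝ)) (ω : K.vertices → ℝ) : Prop :=
  ∀ a ∈ orientedFacetSequences K,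
    (liftMatrix (fun i => (a i : Fin d → ℝ)) fun i => ω (a i)).det ≤ 0

lemma mem_orientedFacetSequences_iff {a : Fin (d + 2) → K.vertices}
    (ha : (fun i => (a i : Fin d → ℝ)) = flank u f v) :
    a ∈ orientedFacetSequences K ↔
      IsFacetPair K (Finset.univ.image f) u v ∧ 0 < (homMatrix (Fin.cons u f)).det := by
  have hai (i) : (a i : Fin d → ℝ) = flank u f v i := congrFun ha i
  have hinj : Function.Injective a ↔ Function.Injective (flank u f v) := by
    rw [← ha]
    exact (Subtype.val_injective.of_comp_iff a).symm
  simp only [orientedFacetSequences, mem_ofPred_eq, hai, hinj, image_flank_castSucc,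
    image_flank_succ, isFacetPair_image_iff (finrank_fin_fun ℝ), and_assoc]
  simp only [flank_castSucc]

lemma detCond_iff {ω : K.vertices → ℝ} {g : (Fin d → ℝ) → ℝ} (hg : ∀ v : K.vertices, g v = ω v) :
    DetCond K ω ↔ ∀ f u v, IsFacetPair K (Finset.univ.image f) u v →
      0 < (homMatrix (Fin.cons u f)).det →
        (liftMatrix (flank u f v) (g ∘ flank u f v)).det ≤ 0 := by
  simp only [DetCond, ← hg]
  constructor
  · intro hK f u v h hpos
    have hmem (i) : flank u f v i ∈ K.vertices := by
      refine i.cases ?_ fun i => ?_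
      · exact subset_vertices h.left_mem (by simp [flank])
      · refine subset_vertices h.right_mem ?_
        rw [← image_flank_succ u f v]
        exact Finset.mem_coe.2 (Finset.mem_image_of_mem _ (Finset.mem_univ i))
    exact hK (fun i => ⟨flank u f v i, hmem i⟩) ((mem_orientedFacetSequences_iff rfl).2 ⟨h, hpos⟩)
  · intro hK a ha
    obtain ⟨u, f, v, huv⟩ := exists_eq_flank fun i => (a i : Fin d → ℝ)
    obtain ⟨h, hpos⟩ := (mem_orientedFacetSequences_iff huv).1 ha
    have := hK f u v h hpos
    rwa [← huv] at this

lemma detCond_iff_isLocallyConcave {ω : K.vertices → ℝ} {g : (Fin d → ℝ) → ℝ}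
    (hg : ∀ v : K.vertices, g v = ω v) : DetCond K ω ↔ IsLocallyConcave K g := by
  rw [detCond_iff hg]
  constructor
  · intro hdet F u v h φ hφ
    obtain ⟨f, rfl⟩ := exists_image_univ_eq (h.card_eq.trans (finrank_fin_fun ℝ))
    obtain hpos | hpos := h.det_homMatrix_cons_pos_or
    · exact (det_liftMatrix_flank_nonpos_iff hpos hφ).1 (hdet f u v h hpos)
    · obtain ⟨χ, hχ⟩ := exists_affineMap_eqOn (K.indep h.right_mem) g
      exact h.apex_le_symm hφ hχ
        ((det_liftMatrix_flank_nonpos_iff hpos hχ).1 (hdet f v u h.symm hpos))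
  · intro hloc f u v h hpos
    obtain ⟨φ, hφ⟩ := exists_affineMap_eqOn (K.indep h.left_mem) g
    exact (det_liftMatrix_flank_nonpos_iff hpos hφ).2 (hloc h φ hφ)

theorem detCond_iff_forall_concaveOn (hfin : K.faces.Finite) (hconv : Convex ℝ K.space)
    (hpure : IsPure K) {ω : K.vertices → ℝ} :
    DetCond K ω ↔ ∀ g : (Fin d → ℝ) → ℝ,
      (IsPiecewiseAffine K g ∧ ∀ v : K.vertices, g v = ω v) → ConcaveOn ℝ K.space g := by
  have hiff {g : (Fin d → ℝ) → ℝ} (hg : IsPiecewiseAffine K g) (hω : ∀ v : K.vertices, g v = ω v) :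
      DetCond K ω ↔ ConcaveOn ℝ K.space g :=
    (detCond_iff_isLocallyConcave hω).trans
      (hg.concaveOn_iff_isLocallyConcave hfin hconv hpure).symm
  obtain ⟨g, hg, hgω⟩ := exists_isPiecewiseAffine_eqOn_vertices K (Function.extend Subtype.val ω 0)
  have hω (v : K.vertices) : g v = ω v :=
    (hgω v.2).trans (Subtype.val_injective.extend_apply ω 0 v)
  exact ⟨fun h g hg => (hiff hg.1 hg.2).1 h, fun h => (hiff hg hω).2 (h g ⟨hg, hω⟩)⟩

/-- `det [(aᵢ, 1, ω aᵢ)]` as a linear functional of the heights `ω`, which defines a half-space.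
Linearity comes from Cramer's map: it sends `w` to the determinants with one column replaced by
`w`. -/
noncomputable def liftDet (a : Fin (d + 2) → K.vertices) : (K.vertices → ℝ) →ₗ[ℝ] ℝ :=
  LinearMap.proj (Fin.last (d + 1)) ∘ₗ
    Matrix.cramer (liftMatrix (fun i => (a i : Fin d → ℝ)) 0).transpose ∘ₗ LinearMap.funLeft ℝ ℝ a

lemma liftDet_apply (a : Fin (d + 2) → K.vertices) (ω : K.vertices → ℝ) :
    liftDet a ω = (liftMatrix (fun i => (a i : Fin d → ℝ)) fun i => ω (a i)).det := by
  rw [liftDet, LinearMap.comp_apply, LinearMap.comp_apply, LinearMap.proj_apply,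
    Matrix.cramer_transpose_apply, updateRow_last_liftMatrix]
  rfl

lemma exists_setOf_detCond_eq_iInter (hfin : K.faces.Finite) :
    ∃ (m : ℕ) (L : Fin m → ((K.vertices → ℝ) →ₗ[ℝ] ℝ)),
      {ω | DetCond K ω} = ⋂ i, {ω | L i ω ≤ 0} := by
  have : Finite K.vertices := vertices_finite hfin
  obtain ⟨m, ⟨e⟩⟩ := Finite.exists_equiv_fin (orientedFacetSequences K)
  refine ⟨m, fun i => liftDet (e.symm i : Fin (d + 2) → K.vertices), ?_⟩
  ext ω
  simp only [mem_iInter, mem_ofPred_eq, DetCond, ← liftDet_apply]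
  rw [← e.symm.surjective.forall (p := fun a => liftDet a.1 ω ≤ 0), Subtype.forall]

end DeterminantInequalities

end SecondaryCone

/-- For a finite, pure `d`-dimensional geometric simplicial complex `K`
in `ℝ^d` with convex space having nonempty interior, the secondary cone
`C(K) = {ω ∈ ℝ^V : the piecewise-linear interpolant g_{K,ω} is concave on |K|}`
equals the set of `ω` satisfying, for every ordered pair of `(d+1)`-element faces
`{a₁,…,a_{d+1}}` and `{a₂,…,a_{d+2}}` sharing `a₂,…,a_{d+1}` with the first one
positively oriented, the determinant inequality
`det[(aᵢ, 1, ω(aᵢ))_{i=1,…,d+2}] ≤ 0`. In particular `C(K)` is a closed convex cone and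
an intersection of finitely many closed linear half-spaces of `ℝ^V`. -/
theorem stmt5 (d : ℕ) (K : Geometry.SimplicialComplex ℝ (Fin d → ℝ))
    (hfin : K.faces.Finite)
    (hconv : Convex ℝ K.space) (hint : (interior K.space).Nonempty)
    (hpure : ∀ σ ∈ K.faces, ∃ τ ∈ K.faces, σ ⊆ τ ∧ τ.card = d + 1) :
    let C : Set (↥K.vertices → ℝ) := {ω | ∀ g : (Fin d → ℝ) → ℝ,
      ((∀ σ ∈ K.faces, ∃ h : (Fin d → ℝ) →ᵃ[ℝ] ℝ,
          ∀ x ∈ convexHull ℝ (σ : Set (Fin d → ℝ)), g x = h x) ∧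
        ∀ v : ↥K.vertices, g ↑v = ω v) →
      ConcaveOn ℝ K.space g}
    C = {ω | ∀ a : Fin (d + 2) → ↥K.vertices, Function.Injective a →
        Finset.image (fun i : Fin (d + 1) => (↑(a (Fin.castSucc i)) : Fin d → ℝ))
          Finset.univ ∈ K.faces →
        Finset.image (fun i : Fin (d + 1) => (↑(a (Fin.succ i)) : Fin d → ℝ))
          Finset.univ ∈ K.faces →
        0 < Matrix.det (Matrix.of fun i j : Fin (d + 1) =>
          if h : (i : ℕ) < d then (↑(a (Fin.castSucc j)) : Fin d → ℝ) ⟨i, h⟩ else 1) →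
        Matrix.det (Matrix.of fun i j : Fin (d + 2) =>
          if hi : (i : ℕ) < d then (↑(a j) : Fin d → ℝ) ⟨i, hi⟩
          else if (i : ℕ) = d then 1 else ω (a j)) ≤ 0} ∧
      IsClosed C ∧ Convex ℝ C ∧ (∀ c : ℝ, 0 ≤ c → ∀ ω ∈ C, c • ω ∈ C) ∧
      ∃ (m : ℕ) (f : Fin m → ((↥K.vertices → ℝ) →ₗ[ℝ] ℝ)),
        C = ⋂ i, {ω | f i ω ≤ 0} := by
  intro C
  have hC : C = {ω | SecondaryCone.DetCond K ω} := Set.ext fun ω =>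
    (SecondaryCone.detCond_iff_forall_concaveOn hfin hconv
      fun σ hσ => by simpa using hpure σ hσ).symm
  obtain ⟨m, L, hL⟩ := SecondaryCone.exists_setOf_detCond_eq_iInter hfin
  rw [← hC] at hL
  refine ⟨hC.trans (Set.ext fun ω => ⟨fun h a hinj hσ hτ hpos => h a ⟨hinj, hσ, hτ, hpos⟩,
    fun h a ⟨hinj, hσ, hτ, hpos⟩ => h a hinj hσ hτ hpos⟩), ?_, ?_, ?_, m, L, hL⟩
  · have : Finite K.vertices := SecondaryCone.vertices_finite hfin
    rw [hL]
    exact isClosed_iInter fun i =>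
      isClosed_le (L i).continuous_of_finiteDimensional continuous_const
  · rw [hL]
    exact convex_iInter fun i => convex_halfSpace_le (L i).isLinear 0
  · intro c hc ω hω
    simp only [hL, Set.mem_iInter, Set.mem_ofPred_eq, map_smul, smul_eq_mul] at hω ⊢
    exact fun i => mul_nonpos_of_nonneg_of_nonpos hc (hω i)
end

section
/- Let K be a finite geometric simplicial complex in ℝ^d that is pure d-dimensional, with space Q = |K| and vertex set V, and let ω : V → ℝ. Then the Lebesgue integral of the piecewise-linear interpolant g_{K,ω} over Q equals (1/(d+1)) · Σ_σ vol(convexHull ℝ σ) · (Σ_{a ∈ σ} ω(a)), where the outer sum ranges over all faces σ of K with d+1 elements and vol denotes d-dimensional Lebesgue measure. -/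
open MeasureTheory

/-!
Every permutation of the vertices of a `d`-simplex extends to an affine self-map of the space. A
transposition gives an involution, whose linear part has determinant `±1`; so it preserves Lebesgue
measure and the simplex while exchanging two barycentric coordinates. Hence all `d + 1` coordinates
have the same integral over the simplex and, as they sum to `1`, this is the volume divided by
`d + 1`. An affine function is the combination of the coordinates weighted by its vertex values,
which settles the case of one simplex. Distinct faces of a complex overlap in the convex hull of
at most `d` points, a null set, so the integral over the complex is the sum of the integrals over
all faces, among which those of dimension less than `d` contribute `0`.
-/

section Barycentric

variable {𝕜 ι E F : Type*} [Ring 𝕜] [Fintype ι] [AddCommGroup E] [Module 𝕜 E]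
  [AddCommGroup F] [Module 𝕜 F]

lemma affineMap_eq_sum_coord_smul (b : AffineBasis ι 𝕜 E) (h : E →ᵃ[𝕜] F) (x : E) :
    h x = ∑ i, b.coord i x • h (b i) := by
  conv_lhs => rw [← b.affineCombination_coord_eq_self x]
  rw [Finset.map_affineCombination _ _ _ (b.sum_coord_apply_eq_one x),
    Finset.affineCombination_eq_linear_combination _ _ _ (b.sum_coord_apply_eq_one x)]
  rfl

/-- The affine map that sends the vertex `b i` to `b (e i)` for every `i`; on a simplex it realises
the permutation `e` of the vertices as a symmetry. -/
noncomputable def vertexPerm (b : AffineBasis ι 𝕜 E) (e : Equiv.Perm ι) : E →ᵃ[𝕜] E :=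
  (Fintype.linearCombination 𝕜 (b ∘ e)).toAffineMap.comp b.coords

lemma vertexPerm_apply (b : AffineBasis ι 𝕜 E) (e : Equiv.Perm ι) (x : E) :
    vertexPerm b e x = ∑ i, b.coord i x • b (e i) :=
  Fintype.linearCombination_apply 𝕜 _ _

lemma coord_vertexPerm (b : AffineBasis ι 𝕜 E) (e : Equiv.Perm ι) (i : ι) (x : E) :
    b.coord i (vertexPerm b e x) = b.coord (e.symm i) x := by
  have hsum : ∑ j, b.coord (e.symm j) x = 1 := by
    rw [e.symm.sum_comp fun j => b.coord j x, b.sum_coord_apply_eq_one]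
  have hcomb : vertexPerm b e x =
      Finset.univ.affineCombination 𝕜 b fun j => b.coord (e.symm j) x := by
    rw [Finset.affineCombination_eq_linear_combination _ _ _ hsum, vertexPerm_apply,
      ← Equiv.sum_comp e fun j => b.coord (e.symm j) x • b j]
    simp only [Equiv.symm_apply_apply]
  rw [hcomb, b.coord_apply_combination_of_mem (Finset.mem_univ i) hsum]

lemma involutive_vertexPerm (b : AffineBasis ι 𝕜 E) {e : Equiv.Perm ι}
    (he : Function.Involutive e) : Function.Involutive (vertexPerm b e) := fun x =>
  b.ext_elem fun i => by
    simp only [coord_vertexPerm, Function.Involutive.symm_eq_self_of_involutive e he, he i]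

lemma vertexPerm_preimage_convexHull {𝕜 : Type*} [Field 𝕜] [LinearOrder 𝕜]
    [IsStrictOrderedRing 𝕜] [Module 𝕜 E] (b : AffineBasis ι 𝕜 E) (e : Equiv.Perm ι) :
    vertexPerm b e ⁻¹' convexHull 𝕜 (Set.range b) = convexHull 𝕜 (Set.range b) := by
  ext x
  simp only [b.convexHull_eq_nonneg_coord, Set.mem_preimage, Set.mem_ofPred_eq, coord_vertexPerm]
  exact e.symm.forall_congr_right (q := fun j => 0 ≤ b.coord j x)

end Barycentric

lemma abs_det_eq_one_of_involutive {𝕜 E : Type*} [CommRing 𝕜] [LinearOrder 𝕜]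
    [IsStrictOrderedRing 𝕜] [AddCommGroup E] [Module 𝕜 E] {f : E →ₗ[𝕜] E}
    (hf : Function.Involutive f) : |LinearMap.det f| = 1 := by
  have hcomp : f ∘ₗ f = LinearMap.id := LinearMap.ext hf
  have hmul : LinearMap.det f * LinearMap.det f = 1 := by
    rw [← LinearMap.det_comp, hcomp, LinearMap.det_id]
  exact (abs_eq zero_le_one).2 (mul_self_eq_one_iff.1 hmul)

section Finset

variable {E : Type*} {σ : Finset E}

lemma affineSpan_eq_top_iff_card_eq {𝕜 : Type*} [DivisionRing 𝕜] [AddCommGroup E] [Module 𝕜 E]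
    [FiniteDimensional 𝕜 E] (hσ : AffineIndependent 𝕜 ((↑) : σ → E)) :
    affineSpan 𝕜 (σ : Set E) = ⊤ ↔ σ.card = Module.finrank 𝕜 E + 1 := by
  simpa using hσ.affineSpan_eq_top_iff_card_eq_finrank_add_one

lemma measurableSet_convexHull_finset [NormedAddCommGroup E] [NormedSpace ℝ E]
    [MeasurableSpace E] [BorelSpace E] (σ : Finset E) :
    MeasurableSet (convexHull ℝ (σ : Set E)) :=
  (σ.finite_toSet.isClosed_convexHull ℝ).measurableSet

end Finset

section Simplex

variable {E F : Type*} [NormedAddCommGroup E] [NormedSpace ℝ E] [FiniteDimensional ℝ E]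
  [MeasurableSpace E] [BorelSpace E] [NormedAddCommGroup F] [NormedSpace ℝ F] (μ : Measure E)

lemma measurePreserving_affineMap_of_involutive [μ.IsAddHaarMeasure] {f : E →ᵃ[ℝ] E}
    (hf : Function.Involutive f) : MeasurePreserving f μ μ := by
  have hlin : Function.Involutive f.linear := fun v => by
    have hzero : f.linear (f v - f 0) = v - 0 := by
      rw [← vsub_eq_sub, f.linearMap_vsub, hf v, hf 0, vsub_eq_sub]
    rwa [← vsub_eq_sub, ← f.linearMap_vsub, vsub_eq_sub, sub_zero] at hzero
  have hdet : |LinearMap.det f.linear| = 1 := abs_det_eq_one_of_involutive hlin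
  have hpres : MeasurePreserving f.linear μ μ := by
    refine ⟨f.linear.continuous_of_finiteDimensional.measurable, ?_⟩
    rw [μ.map_linearMap_addHaar_eq_smul_addHaar (abs_pos.1 (hdet ▸ one_pos)), abs_inv, hdet]
    simp
  rw [f.decomp]
  exact (measurePreserving_add_right μ (f 0)).comp hpres

lemma integrableOn_convexHull_affineMap [IsFiniteMeasureOnCompacts μ] {s : Set E} (hs : s.Finite)
    (h : E →ᵃ[ℝ] F) : IntegrableOn h (convexHull ℝ s) μ :=
  h.continuous_of_finiteDimensional.continuousOn.integrableOn_compact (hs.isCompact_convexHull ℝ)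

variable [μ.IsAddHaarMeasure]

section AffineBasis

variable {ι : Type*} (b : AffineBasis ι ℝ E)

lemma setIntegral_coord_eq_setIntegral_coord [Finite ι] (i j : ι) :
    ∫ x in convexHull ℝ (Set.range b), b.coord i x ∂μ =
      ∫ x in convexHull ℝ (Set.range b), b.coord j x ∂μ := by
  classical
  have := Fintype.ofFinite ι
  have hinv : Function.Involutive (vertexPerm b (Equiv.swap i j)) :=
    involutive_vertexPerm b (Equiv.swap_apply_self i j)
  have hpres := measurePreserving_affineMap_of_involutive μ hinv
  have key := hpres.setIntegral_preimage_emb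
    (MeasurableEquiv.ofInvolutive _ hinv hpres.measurable).measurableEmbedding
    (b.coord j) (convexHull ℝ (Set.range b))
  simpa only [vertexPerm_preimage_convexHull, coord_vertexPerm, Equiv.symm_swap,
    Equiv.swap_apply_right] using key

variable [Fintype ι]

lemma setIntegral_coord (i : ι) :
    ∫ x in convexHull ℝ (Set.range b), b.coord i x ∂μ =
      μ.real (convexHull ℝ (Set.range b)) / Fintype.card ι := by
  have : Nonempty ι := ⟨i⟩
  rw [eq_div_iff (Nat.cast_ne_zero.2 Fintype.card_ne_zero)]
  calc (∫ x in convexHull ℝ (Set.range b), b.coord i x ∂μ) * Fintype.card ι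
      = ∑ j, ∫ x in convexHull ℝ (Set.range b), b.coord j x ∂μ := by
        simp only [setIntegral_coord_eq_setIntegral_coord μ b _ i, Finset.sum_const,
          Finset.card_univ, nsmul_eq_mul, mul_comm]
    _ = ∫ x in convexHull ℝ (Set.range b), ∑ j, b.coord j x ∂μ :=
        (integral_finsetSum _ fun j _ =>
          integrableOn_convexHull_affineMap μ (Set.finite_range b) (b.coord j)).symm
    _ = μ.real (convexHull ℝ (Set.range b)) := by
        simp only [b.sum_coord_apply_eq_one, setIntegral_const, smul_eq_mul, mul_one]

variable [CompleteSpace F]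

lemma setIntegral_convexHull_range_affineMap (h : E →ᵃ[ℝ] F) :
    ∫ x in convexHull ℝ (Set.range b), h x ∂μ =
      (μ.real (convexHull ℝ (Set.range b)) / Fintype.card ι) • ∑ i, h (b i) := by
  have hint (i : ι) :
      IntegrableOn (fun x => b.coord i x • h (b i)) (convexHull ℝ (Set.range b)) μ :=
    (integrableOn_convexHull_affineMap μ (Set.finite_range b) (b.coord i)).smul_const _
  calc ∫ x in convexHull ℝ (Set.range b), h x ∂μ
      = ∫ x in convexHull ℝ (Set.range b), ∑ i, b.coord i x • h (b i) ∂μ :=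
        integral_congr_ae (.of_forall (affineMap_eq_sum_coord_smul b h))
    _ = ∑ i, ∫ x in convexHull ℝ (Set.range b), b.coord i x • h (b i) ∂μ :=
        integral_finsetSum _ fun i _ => hint i
    _ = _ := by simp only [integral_smul_const, setIntegral_coord, Finset.smul_sum]

end AffineBasis

variable {μ} {σ : Finset E}

lemma measure_convexHull_eq_zero_of_card_ne (hσ : AffineIndependent ℝ ((↑) : σ → E))
    (hcard : σ.card ≠ Module.finrank ℝ E + 1) : μ (convexHull ℝ (σ : Set E)) = 0 :=
  measure_mono_null (convexHull_subset_affineSpan _)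
    (Measure.addHaar_affineSubspace μ _ fun htop =>
      hcard ((affineSpan_eq_top_iff_card_eq hσ).1 htop))

lemma setIntegral_convexHull_affineMap [CompleteSpace F] (hσ : AffineIndependent ℝ ((↑) : σ → E))
    (h : E →ᵃ[ℝ] F) :
    ∫ x in convexHull ℝ (σ : Set E), h x ∂μ =
      (μ.real (convexHull ℝ (σ : Set E)) / (Module.finrank ℝ E + 1)) • ∑ a ∈ σ, h a := by
  by_cases hcard : σ.card = Module.finrank ℝ E + 1
  · let b : AffineBasis σ ℝ E :=
      ⟨(↑), hσ, by simpa using (affineSpan_eq_top_iff_card_eq hσ).2 hcard⟩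
    have hrange : Set.range b = (σ : Set E) := Subtype.range_coe
    have hsum : ∑ i, h (b i) = ∑ a ∈ σ, h a := Finset.sum_coe_sort σ h
    simpa only [hrange, hsum, Fintype.card_coe, hcard, Nat.cast_add, Nat.cast_one] using
      setIntegral_convexHull_range_affineMap μ b h
  · have hnull : μ (convexHull ℝ (σ : Set E)) = 0 := measure_convexHull_eq_zero_of_card_ne hσ hcard
    rw [setIntegral_measure_zero _ hnull, measureReal_def, hnull, ENNReal.toReal_zero, zero_div,
      zero_smul]

end Simplex

section Complex

/-- A function is piecewise affine on a simplicial complex if on each closed face it agrees with an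
affine map. The interpolant of the weights `ω` is such a function taking the value `ω v` at every
vertex `v`; it is only constrained on the space of the complex. -/
def IsPiecewiseAffine {E F : Type*} [AddCommGroup E] [Module ℝ E] [AddCommGroup F] [Module ℝ F]
    (K : Geometry.SimplicialComplex ℝ E) (g : E → F) : Prop :=
  ∀ σ ∈ K.faces, ∃ h : E →ᵃ[ℝ] F, Set.EqOn g h (convexHull ℝ (σ : Set E))

variable {E F : Type*} [NormedAddCommGroup E] [NormedSpace ℝ E] [FiniteDimensional ℝ E]
  [MeasurableSpace E] [BorelSpace E] [NormedAddCommGroup F] [NormedSpace ℝ F] {μ : Measure E}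
  {K : Geometry.SimplicialComplex ℝ E} {g : E → F}

lemma IsPiecewiseAffine.integrableOn_space [IsFiniteMeasureOnCompacts μ]
    (hg : IsPiecewiseAffine K g) (hK : K.faces.Finite) : IntegrableOn g K.space μ := by
  refine (integrableOn_finite_biUnion hK).2 fun σ hσ => ?_
  obtain ⟨h, hgh⟩ := hg σ hσ
  exact (integrableOn_convexHull_affineMap μ σ.finite_toSet h).congr_fun hgh.symm
    (measurableSet_convexHull_finset σ)

variable [μ.IsAddHaarMeasure]

lemma aedisjoint_convexHull_faces {σ τ : Finset E} (hσ : σ ∈ K.faces) (hτ : τ ∈ K.faces)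
    (hne : σ ≠ τ) : AEDisjoint μ (convexHull ℝ (σ : Set E)) (convexHull ℝ (τ : Set E)) := by
  classical
  have hsub : (↑(σ ∩ τ) : Set E) ⊆ σ := Finset.coe_subset.2 Finset.inter_subset_left
  rw [AEDisjoint, K.convexHull_inter_convexHull hσ hτ, ← Finset.coe_inter]
  refine measure_convexHull_eq_zero_of_card_ne ((K.indep hσ).mono hsub) fun hcard => hne ?_
  have card_le {ρ : Finset E} (hρ : ρ ∈ K.faces) : ρ.card ≤ (σ ∩ τ).card := by
    simpa [hcard] using (K.indep hρ).card_le_finrank_succ.trans <|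
      Nat.add_le_add_right (Submodule.finrank_le _) 1
  exact (Finset.eq_of_subset_of_card_le Finset.inter_subset_left (card_le hσ)).symm.trans
    (Finset.eq_of_subset_of_card_le Finset.inter_subset_right (card_le hτ))

lemma hasSum_setIntegral_faces (hK : K.faces.Countable) (hg : IntegrableOn g K.space μ) :
    HasSum (fun σ : K.faces => ∫ x in convexHull ℝ ((σ : Finset E) : Set E), g x ∂μ)
      (∫ x in K.space, g x ∂μ) := by
  have : Countable K.faces := hK
  have hspace : K.space = ⋃ σ : K.faces, convexHull ℝ ((σ : Finset E) : Set E) :=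
    Set.biUnion_eq_iUnion _ _
  rw [hspace] at hg ⊢
  exact hasSum_integral_iUnion_ae
    (fun σ => (measurableSet_convexHull_finset σ.1).nullMeasurableSet)
    (fun σ τ hne => aedisjoint_convexHull_faces σ.2 τ.2 (Subtype.coe_ne_coe.2 hne)) hg

lemma setIntegral_space_eq_sum_faces (hK : K.faces.Finite) (hg : IntegrableOn g K.space μ) :
    ∫ x in K.space, g x ∂μ = ∑ σ ∈ hK.toFinset, ∫ x in convexHull ℝ (σ : Set E), g x ∂μ := by
  have := hK.fintype
  rw [Finset.sum_subtype _ (fun _ => hK.mem_toFinset)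
    fun σ => ∫ x in convexHull ℝ (σ : Set E), g x ∂μ]
  exact (hasSum_setIntegral_faces hK.countable hg).unique (hasSum_fintype _)

variable [CompleteSpace F]

lemma IsPiecewiseAffine.setIntegral_face (hg : IsPiecewiseAffine K g) {σ : Finset E}
    (hσ : σ ∈ K.faces) :
    ∫ x in convexHull ℝ (σ : Set E), g x ∂μ =
      (μ.real (convexHull ℝ (σ : Set E)) / (Module.finrank ℝ E + 1)) • ∑ a ∈ σ, g a := by
  obtain ⟨h, hgh⟩ := hg σ hσ
  rw [setIntegral_congr_fun (measurableSet_convexHull_finset σ) hgh,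
    setIntegral_convexHull_affineMap (K.indep hσ) h,
    Finset.sum_congr rfl fun a ha => (hgh (subset_convexHull ℝ _ ha)).symm]

theorem stmt7_general (hK : K.faces.Finite) (ω : E → F) (hg : IsPiecewiseAffine K g)
    (hgω : ∀ v ∈ K.vertices, g v = ω v) :
    ∫ x in K.space, g x ∂μ =
      (1 / (Module.finrank ℝ E + 1 : ℝ)) •
        ∑ σ ∈ hK.toFinset with σ.card = Module.finrank ℝ E + 1,
          μ.real (convexHull ℝ (σ : Set E)) • ∑ a ∈ σ, ω a := by
  have hvertices {σ : Finset E} (hσ : σ ∈ K.faces) : ∑ a ∈ σ, g a = ∑ a ∈ σ, ω a :=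
    Finset.sum_congr rfl fun a ha => hgω a <|
      K.down_closed hσ (Finset.singleton_subset_iff.2 ha) (Finset.singleton_nonempty a)
  calc ∫ x in K.space, g x ∂μ
      = ∑ σ ∈ hK.toFinset, ∫ x in convexHull ℝ (σ : Set E), g x ∂μ :=
        setIntegral_space_eq_sum_faces hK (hg.integrableOn_space hK)
    _ = ∑ σ ∈ hK.toFinset, (1 / (Module.finrank ℝ E + 1 : ℝ)) •
          μ.real (convexHull ℝ (σ : Set E)) • ∑ a ∈ σ, ω a :=
        Finset.sum_congr rfl fun σ hσ => by
          have hσK : σ ∈ K.faces := hK.mem_toFinset.1 hσ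
          rw [hg.setIntegral_face hσK, hvertices hσK, smul_smul, one_div_mul_eq_div]
    _ = _ := by
        rw [← Finset.smul_sum, Finset.sum_filter_of_ne]
        intro σ hσ hne
        contrapose! hne
        rw [measureReal_def,
          measure_convexHull_eq_zero_of_card_ne (K.indep (hK.mem_toFinset.1 hσ)) hne,
          ENNReal.toReal_zero, zero_smul]

end Complex

/-- For a finite, pure `d`-dimensional geometric simplicial complex `K`
in `ℝ^d` with vertex weights `ω`, the integral of the piecewise-linear interpolant
`g = g_{K,ω}` over `Q = |K|` equals
`(1/(d+1)) · Σ_{σ : σ ∈ K.faces, |σ| = d+1} vol(convexHull ℝ σ) · Σ_{a ∈ σ} ω a`. -/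
theorem stmt7 (d : ℕ) (K : Geometry.SimplicialComplex ℝ (Fin d → ℝ))
    (hfin : K.faces.Finite)
    (hpure : ∀ σ ∈ K.faces, ∃ τ ∈ K.faces, σ ⊆ τ ∧ τ.card = d + 1)
    (ω : (Fin d → ℝ) → ℝ) (g : (Fin d → ℝ) → ℝ)
    (hg : ∀ σ ∈ K.faces, ∃ h : (Fin d → ℝ) →ᵃ[ℝ] ℝ,
      ∀ x ∈ convexHull ℝ (σ : Set (Fin d → ℝ)), g x = h x)
    (hgω : ∀ v ∈ K.vertices, g v = ω v) :
    ∫ x in K.space, g x =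
      (1 / (d + 1 : ℝ)) *
        ∑ σ ∈ hfin.toFinset.filter (fun σ => σ.card = d + 1),
          (volume (convexHull ℝ (σ : Set (Fin d → ℝ)))).toReal * ∑ a ∈ σ, ω a := by
  simpa only [Module.finrank_fin_fun, smul_eq_mul, measureReal_def] using
    stmt7_general (μ := volume) hfin ω hg hgω
end

section
/- Let v, w ∈ L⁺ be linearly independent. Then there is a unique point p ∈ H lying in the linear span of {v, w} with ⟨p, v⟩ = −1, and a unique point q ∈ H lying in the linear span of {v, w} with ⟨q, w⟩ = −1; explicitly p = (1/2)v + (1/(2λ²))w and q = (1/(2λ²))v + (1/2)w, where λ = λ(v,w). Moreover −⟨p, q⟩ = (λ² + λ^{−2})/2, i.e., −⟨p,q⟩ = cosh(2 log λ), so that the λ-length satisfies λ(v,w) = e^{ℓ/2} where ℓ = 2 log λ is the signed distance between the horocycles h(v) and h(w) measured along the geodesic H ∩ span{v,w}. -/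
/-!
If `v` and `w` are null, the form is determined on `span {v, w}` by the number `⟨v, w⟩`:
`⟨a v + b w, c v + d w⟩ = (a d + b c) ⟨v, w⟩`. Hence for `x = a v + b w` the condition
`⟨x, v⟩ = -1` fixes `b`, and `⟨x, x⟩ = -1` then fixes `a = 1 / 2`. That `⟨v, w⟩ < 0` is the reversed
Cauchy–Schwarz inequality: rescaled to the same time coordinate, `v` and `w` differ by a nonzero
vector of time coordinate `0`; such vectors have positive square, and here the square is a negative
multiple of `⟨v, w⟩`.
-/

/-- The Minkowski bilinear form on `ℝ³`. -/
def mink (v w : Fin 3 → ℝ) : ℝ := v 0 * w 0 + v 1 * w 1 - v 2 * w 2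

open LinearMap (BilinForm)

theorem bilin_smul_add_smul_of_isotropic {R M : Type*} [CommRing R] [AddCommGroup M] [Module R M]
    {B : BilinForm R M} (hB : B.IsSymm) {v w : M} (hv : B v v = 0) (hw : B w w = 0)
    (a b c d : R) : B (a • v + b • w) (c • v + d • w) = (a * d + b * c) * B v w := by
  have hwv : B w v = B v w := hB.eq w v
  simp only [map_add, map_smul, LinearMap.add_apply, LinearMap.smul_apply, smul_eq_mul, hv, hw, hwv]
  ring

theorem bilin_comb_eq_neg_one_iff {K V : Type*} [Field K] [NeZero (2 : K)] [AddCommGroup V]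
    [Module K V] {B : BilinForm K V} (hB : B.IsSymm) {v w : V} (hv : B v v = 0) (hw : B w w = 0)
    (hvw : B v w ≠ 0) (a b : K) :
    B (a • v + b • w) (a • v + b • w) = -1 ∧ B (a • v + b • w) v = -1 ↔
      a = 1 / 2 ∧ b = -1 / B v w := by
  have hcomb_self : B (a • v + b • w) (a • v + b • w) = 2 * a * (b * B v w) := by
    rw [bilin_smul_add_smul_of_isotropic hB hv hw]
    ring
  have hcomb_v : B (a • v + b • w) v = b * B v w := by
    simpa using bilin_smul_add_smul_of_isotropic hB hv hw a b 1 0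
  rw [hcomb_self, hcomb_v, eq_div_iff hvw, eq_div_iff two_ne_zero, and_congr_left_iff]
  intro hb
  rw [hb, mul_neg_one, neg_inj, mul_comm]

theorem bilin_neg_of_isotropic_of_linearIndependent {K V : Type*} [Field K] [LinearOrder K]
    [IsStrictOrderedRing K] [AddCommGroup V] [Module K V] {B : BilinForm K V} (hB : B.IsSymm)
    {t : V →ₗ[K] K} (ht : ∀ u, t u = 0 → u ≠ 0 → 0 < B u u) {v w : V}
    (hv : B v v = 0) (htv : 0 < t v) (hw : B w w = 0) (htw : 0 < t w)
    (hind : LinearIndependent K ![v, w]) : B v w < 0 := by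
  set u : V := t w • v + -t v • w with hu
  have htu : t u = 0 := by
    simp only [hu, map_add, map_smul, smul_eq_mul]
    ring
  have hu_ne : u ≠ 0 := fun h ↦ htw.ne' (LinearIndependent.pair_iff.1 hind _ _ h).1
  have hBu : B u u = 2 * (t v * t w) * -B v w := by
    rw [hu, bilin_smul_add_smul_of_isotropic hB hv hw]
    ring
  have hprod : 0 < 2 * (t v * t w) * -B v w := hBu ▸ ht u htu hu_ne
  exact neg_pos.1 (pos_of_mul_pos_right hprod (by positivity))

theorem cosh_two_mul_log {x : ℝ} (hx : x ≠ 0) :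
    Real.cosh (2 * Real.log x) = (x ^ 2 + x⁻¹ ^ 2) / 2 := by
  have hlog : 2 * Real.log x = Real.log (x ^ 2) := by rw [Real.log_pow, Nat.cast_ofNat]
  rw [hlog, Real.cosh_log (by positivity), inv_pow]

section Lorentzian

variable {V : Type*} [AddCommGroup V] [Module ℝ V]

/-- The positive light cone `L⁺` of the form `B`. The linear functional `t` is the time coordinate:
it says which null vectors point to the future. -/
def lightCone (B : BilinForm ℝ V) (t : V →ₗ[ℝ] ℝ) : Set V :=
  {v | B v v = 0 ∧ 0 < t v}

/-- The upper sheet `H` of the unit hyperboloid of `B`, with time coordinate `t`. -/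
def upperHyperboloid (B : BilinForm ℝ V) (t : V →ₗ[ℝ] ℝ) : Set V :=
  {x | B x x = -1 ∧ 0 < t x}

/-- The horocycle `h(v)` in `upperHyperboloid B t`; in higher dimensions, a horosphere. -/
def horocycle (B : BilinForm ℝ V) (t : V →ₗ[ℝ] ℝ) (v : V) : Set V :=
  {x ∈ upperHyperboloid B t | B x v = -1}

/-- Penner's `λ`-length `λ(v, w)`. It is meaningful when `B v w ≤ 0`; otherwise the square root
takes the junk value `0`. -/
noncomputable def lambdaLength (B : BilinForm ℝ V) (v w : V) : ℝ :=
  √(-(B v w) / 2)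

variable {B : BilinForm ℝ V} {t : V →ₗ[ℝ] ℝ} {v w : V}

theorem lambdaLength_comm (hB : B.IsSymm) (v w : V) : lambdaLength B v w = lambdaLength B w v := by
  have hvw : B v w = B w v := hB.eq v w
  rw [lambdaLength, lambdaLength, hvw]

theorem lambdaLength_pos (hvw : B v w < 0) : 0 < lambdaLength B v w :=
  Real.sqrt_pos.2 (by linarith)

theorem two_mul_lambdaLength_sq (hvw : B v w ≤ 0) : 2 * lambdaLength B v w ^ 2 = -B v w := by
  rw [lambdaLength, Real.sq_sqrt (by linarith), mul_div_cancel₀ _ two_ne_zero]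

theorem span_pair_inter_horocycle (hB : B.IsSymm) (hv : v ∈ lightCone B t)
    (hw : w ∈ lightCone B t) (hvw : B v w < 0) :
    (Submodule.span ℝ {v, w} : Set V) ∩ horocycle B t v =
      {(1 / 2 : ℝ) • v + (1 / (2 * lambdaLength B v w ^ 2)) • w} := by
  have hcoeff : 1 / (2 * lambdaLength B v w ^ 2) = -1 / B v w := by
    rw [two_mul_lambdaLength_sq hvw.le, div_neg, neg_div]
  have hcomb := bilin_comb_eq_neg_one_iff hB hv.1 hw.1 hvw.ne
  rw [hcoeff, Set.eq_singleton_iff_unique_mem]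
  constructor
  · obtain ⟨hself, hself_v⟩ := (hcomb _ _).2 ⟨rfl, rfl⟩
    have htime : 0 < t ((1 / 2 : ℝ) • v + (-1 / B v w) • w) := by
      have hb : 0 < -1 / B v w := div_pos_of_neg_of_neg (by norm_num) hvw
      have htv := hv.2
      have htw := hw.2
      simp only [map_add, map_smul, smul_eq_mul]
      positivity
    exact ⟨Submodule.mem_span_pair.2 ⟨_, _, rfl⟩, ⟨hself, htime⟩, hself_v⟩
  · rintro x ⟨hx, ⟨hself, -⟩, hself_v⟩
    obtain ⟨a, b, rfl⟩ := Submodule.mem_span_pair.1 hx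
    obtain ⟨rfl, rfl⟩ := (hcomb a b).1 ⟨hself, hself_v⟩
    rfl

theorem neg_bilin_horocycle_points (hB : B.IsSymm) (hv : B v v = 0) (hw : B w w = 0)
    (hvw : B v w < 0) :
    -B ((1 / 2 : ℝ) • v + (1 / (2 * lambdaLength B v w ^ 2)) • w)
        ((1 / (2 * lambdaLength B v w ^ 2)) • v + (1 / 2 : ℝ) • w) =
      (lambdaLength B v w ^ 2 + (lambdaLength B v w)⁻¹ ^ 2) / 2 := by
  have hlam := lambdaLength_pos hvw
  have hform : B v w = -(2 * lambdaLength B v w ^ 2) := by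
    rw [two_mul_lambdaLength_sq hvw.le, neg_neg]
  rw [bilin_smul_add_smul_of_isotropic hB hv hw, hform]
  field_simp

theorem stmt10_general (hB : B.IsSymm) (ht : ∀ u, t u = 0 → u ≠ 0 → 0 < B u u)
    (hv : v ∈ lightCone B t) (hw : w ∈ lightCone B t) (hind : LinearIndependent ℝ ![v, w]) :
    let lam : ℝ := lambdaLength B v w
    let p : V := (1 / 2 : ℝ) • v + (1 / (2 * lam ^ 2)) • w
    let q : V := (1 / (2 * lam ^ 2)) • v + (1 / 2 : ℝ) • w
    (Submodule.span ℝ {v, w} : Set V) ∩ horocycle B t v = {p} ∧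
      (Submodule.span ℝ {v, w} : Set V) ∩ horocycle B t w = {q} ∧
      -B p q = (lam ^ 2 + lam⁻¹ ^ 2) / 2 ∧
      -B p q = Real.cosh (2 * Real.log lam) ∧
      lam = Real.exp ((2 * Real.log lam) / 2) := by
  intro lam p q
  have hvw : B v w < 0 :=
    bilin_neg_of_isotropic_of_linearIndependent hB ht hv.1 hv.2 hw.1 hw.2 hind
  have hwv : B w v < 0 := (hB.eq w v).trans_lt hvw
  have hlam : 0 < lam := lambdaLength_pos hvw
  have hq : (Submodule.span ℝ {v, w} : Set V) ∩ horocycle B t w = {q} := by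
    rw [Set.pair_comm, span_pair_inter_horocycle hB hw hv hwv, lambdaLength_comm hB w v, add_comm]
  have hpq : -B p q = (lam ^ 2 + lam⁻¹ ^ 2) / 2 := neg_bilin_horocycle_points hB hv.1 hw.1 hvw
  refine ⟨span_pair_inter_horocycle hB hv hw hvw, hq, hpq, ?_, ?_⟩
  · rw [hpq, cosh_two_mul_log hlam.ne']
  · rw [mul_div_cancel_left₀ _ two_ne_zero, Real.exp_log hlam]

end Lorentzian

/-- `mink` bundled as a bilinear form, to which the results on Lorentzian forms apply. -/
def minkForm : BilinForm ℝ (Fin 3 → ℝ) :=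
  LinearMap.mk₂ ℝ mink
    (fun _ _ _ ↦ by simp only [mink, Pi.add_apply]; ring)
    (fun _ _ _ ↦ by simp only [mink, Pi.smul_apply, smul_eq_mul]; ring)
    (fun _ _ _ ↦ by simp only [mink, Pi.add_apply]; ring)
    (fun _ _ _ ↦ by simp only [mink, Pi.smul_apply, smul_eq_mul]; ring)

theorem minkForm_isSymm : minkForm.IsSymm :=
  ⟨fun v w ↦ show mink v w = mink w v by unfold mink; ring⟩

theorem minkForm_self_pos_of_time_eq_zero {u : Fin 3 → ℝ} (hu2 : u 2 = 0) (hu : u ≠ 0) :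
    0 < minkForm u u := by
  have hself : minkForm u u = u 0 ^ 2 + u 1 ^ 2 := by
    change mink u u = _
    rw [mink, hu2]
    ring
  rw [hself]
  obtain ⟨i, hi⟩ := Function.ne_iff.1 hu
  fin_cases i
  · exact add_pos_of_pos_of_nonneg (sq_pos_of_ne_zero hi) (sq_nonneg _)
  · exact add_pos_of_nonneg_of_pos (sq_nonneg _) (sq_pos_of_ne_zero hi)
  · exact absurd hu2 hi

/-- For linearly independent `v, w ∈ L⁺`, there is a unique point
`p ∈ H ∩ span{v,w}` with `⟨p,v⟩ = −1`, and a unique `q ∈ H ∩ span{v,w}` with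
`⟨q,w⟩ = −1`; explicitly `p = (1/2)v + (1/(2λ²))w` and `q = (1/(2λ²))v + (1/2)w` where
`λ = λ(v,w)`. Moreover `−⟨p,q⟩ = (λ² + λ⁻²)/2 = cosh(2 log λ)`, so `λ = e^{ℓ/2}` with
`ℓ = 2 log λ` the signed distance between the horocycles `h(v)` and `h(w)`. -/
theorem stmt10 (v w : Fin 3 → ℝ)
    (hv : mink v v = 0 ∧ 0 < v 2) (hw : mink w w = 0 ∧ 0 < w 2)
    (hind : LinearIndependent ℝ ![v, w]) :
    let lam : ℝ := Real.sqrt (-(mink v w) / 2)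
    let p : Fin 3 → ℝ := (1 / 2 : ℝ) • v + (1 / (2 * lam ^ 2)) • w
    let q : Fin 3 → ℝ := (1 / (2 * lam ^ 2)) • v + (1 / 2 : ℝ) • w
    (p ∈ Submodule.span ℝ ({v, w} : Set (Fin 3 → ℝ)) ∧
        mink p p = -1 ∧ 0 < p 2 ∧ mink p v = -1) ∧
      (∀ p' : Fin 3 → ℝ, p' ∈ Submodule.span ℝ ({v, w} : Set (Fin 3 → ℝ)) →
        mink p' p' = -1 → 0 < p' 2 → mink p' v = -1 → p' = p) ∧
      (q ∈ Submodule.span ℝ ({v, w} : Set (Fin 3 → ℝ)) ∧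
        mink q q = -1 ∧ 0 < q 2 ∧ mink q w = -1) ∧
      (∀ q' : Fin 3 → ℝ, q' ∈ Submodule.span ℝ ({v, w} : Set (Fin 3 → ℝ)) →
        mink q' q' = -1 → 0 < q' 2 → mink q' w = -1 → q' = q) ∧
      -(mink p q) = (lam ^ 2 + (lam⁻¹) ^ 2) / 2 ∧
      -(mink p q) = Real.cosh (2 * Real.log lam) ∧
      lam = Real.exp ((2 * Real.log lam) / 2) := by
  obtain ⟨hp, hq, hdist⟩ := stmt10_general (t := LinearMap.proj 2) minkForm_isSymm
    (fun _ ↦ minkForm_self_pos_of_time_eq_zero) hv hw hind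
  obtain ⟨⟨hp_span, ⟨hpp, hp2⟩, hpv⟩, hp_unique⟩ := Set.eq_singleton_iff_unique_mem.1 hp
  obtain ⟨⟨hq_span, ⟨hqq, hq2⟩, hqw⟩, hq_unique⟩ := Set.eq_singleton_iff_unique_mem.1 hq
  exact ⟨⟨hp_span, hpp, hp2, hpv⟩, fun p' hs hn h2 hh ↦ hp_unique p' ⟨hs, ⟨hn, h2⟩, hh⟩,
    ⟨hq_span, hqq, hq2, hqw⟩, fun q' hs hn h2 hh ↦ hq_unique q' ⟨hs, ⟨hn, h2⟩, hh⟩, hdist⟩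
end

section
/- The map τ(x) = (x₁/x₃, x₂/x₃, 1/x₃) is an involution of the open half-space {x ∈ ℝ³ : x₃ > 0} (i.e., τ(τ(x)) = x whenever x₃ > 0); it maps the upper hyperboloid H bijectively onto the open upper unit hemisphere N = {x ∈ ℝ³ : x₁² + x₂² + x₃² = 1, x₃ > 0}, and it maps the positive light cone L⁺ bijectively onto the open upper half-cylinder L⁺_N = {x ∈ ℝ³ : x₁² + x₂² = 1, x₃ > 0}. -/
/-!
In homogeneous coordinates, `tau` swaps the third coordinate with the homogenizing one. Hence it
turns the equation `x₁² + x₂² = a x₃² + b` into `x₁² + x₂² = b x₃² + a`. The hyperboloid and the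
hemisphere are the cases `(a, b) = (1, -1)` and `(-1, 1)`, the cone and the cylinder the cases
`(1, 0)` and `(0, 1)`.
-/

/-- The projective transformation from the hyperboloid model to the hemisphere model. -/
noncomputable def tau (x : Fin 3 → ℝ) : Fin 3 → ℝ := ![x 0 / x 2, x 1 / x 2, 1 / x 2]

theorem tau_two_pos_iff {x : Fin 3 → ℝ} : 0 < tau x 2 ↔ 0 < x 2 := by
  simp [tau]

theorem tau_tau {x : Fin 3 → ℝ} (hx : x 2 ≠ 0) : tau (tau x) = x := by
  ext i
  fin_cases i <;> simp [tau, hx]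

/-- The part in the open upper half-space of the quadric of revolution `x₁² + x₂² = a x₃² + b`.
The order of the coefficients is chosen so that `tau` acts by exchanging `a` and `b`. -/
def upperQuadric (a b : ℝ) : Set (Fin 3 → ℝ) :=
  {x | x 0 ^ 2 + x 1 ^ 2 = a * x 2 ^ 2 + b ∧ 0 < x 2}

theorem mapsTo_tau_upperQuadric (a b : ℝ) :
    Set.MapsTo tau (upperQuadric a b) (upperQuadric b a) := by
  rintro x ⟨hx, hpos⟩
  refine ⟨?_, tau_two_pos_iff.mpr hpos⟩
  have hne : x 2 ≠ 0 := hpos.ne'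
  calc (x 0 / x 2) ^ 2 + (x 1 / x 2) ^ 2
      = (x 0 ^ 2 + x 1 ^ 2) / x 2 ^ 2 := by ring
    _ = (a * x 2 ^ 2 + b) / x 2 ^ 2 := by rw [hx]
    _ = b * (1 / x 2) ^ 2 + a := by field_simp; ring

theorem leftInvOn_tau_upperQuadric (a b : ℝ) : Set.LeftInvOn tau tau (upperQuadric a b) :=
  fun _ hx => tau_tau hx.2.ne'

theorem bijOn_tau_upperQuadric (a b : ℝ) :
    Set.BijOn tau (upperQuadric a b) (upperQuadric b a) :=
  Set.InvOn.bijOn ⟨leftInvOn_tau_upperQuadric a b, leftInvOn_tau_upperQuadric b a⟩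
    (mapsTo_tau_upperQuadric a b) (mapsTo_tau_upperQuadric b a)

theorem upperQuadric_one_neg_one :
    upperQuadric 1 (-1) = {x | x 0 * x 0 + x 1 * x 1 - x 2 * x 2 = -1 ∧ 0 < x 2} := by
  grind [upperQuadric]

theorem upperQuadric_neg_one_one :
    upperQuadric (-1) 1 = {x | x 0 ^ 2 + x 1 ^ 2 + x 2 ^ 2 = 1 ∧ 0 < x 2} := by
  grind [upperQuadric]

theorem upperQuadric_one_zero :
    upperQuadric 1 0 = {x | x 0 * x 0 + x 1 * x 1 - x 2 * x 2 = 0 ∧ 0 < x 2} := by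
  grind [upperQuadric]

theorem upperQuadric_zero_one :
    upperQuadric 0 1 = {x | x 0 ^ 2 + x 1 ^ 2 = 1 ∧ 0 < x 2} := by
  grind [upperQuadric]

/-- `τ(x) = (x₁/x₃, x₂/x₃, 1/x₃)` is an involution of the open upper
half-space `{x₃ > 0}`, mapping the upper hyperboloid `H` bijectively onto the open upper
unit hemisphere `N` and the positive light cone `L⁺` bijectively onto the open upper
half-cylinder `L⁺_N`. -/
theorem stmt13 :
    (∀ x : Fin 3 → ℝ, 0 < x 2 → 0 < tau x 2 ∧ tau (tau x) = x) ∧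
      Set.BijOn tau
        {x : Fin 3 → ℝ | x 0 * x 0 + x 1 * x 1 - x 2 * x 2 = -1 ∧ 0 < x 2}
        {x : Fin 3 → ℝ | x 0 ^ 2 + x 1 ^ 2 + x 2 ^ 2 = 1 ∧ 0 < x 2} ∧
      Set.BijOn tau
        {v : Fin 3 → ℝ | v 0 * v 0 + v 1 * v 1 - v 2 * v 2 = 0 ∧ 0 < v 2}
        {x : Fin 3 → ℝ | x 0 ^ 2 + x 1 ^ 2 = 1 ∧ 0 < x 2} := by
  rw [← upperQuadric_one_neg_one, ← upperQuadric_neg_one_one, ← upperQuadric_one_zero,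
    ← upperQuadric_zero_one]
  exact ⟨fun x hx => ⟨tau_two_pos_iff.mpr hx, tau_tau hx.ne'⟩,
    bijOn_tau_upperQuadric 1 (-1), bijOn_tau_upperQuadric 1 0⟩
end

section
/- For all x, v ∈ ℝ³ with x₃ > 0 and v₃ > 0, the Minkowski product satisfies ⟨x, v⟩ = −1 if and only if the Euclidean inner product of τ(x) and τ(v) equals 1. Consequently, for every v ∈ L⁺ the image under τ of the horocycle h(v) = {x ∈ H : ⟨x,v⟩ = −1} equals {y ∈ τ(H) : y₁·τ(v)₁ + y₂·τ(v)₂ + y₃·τ(v)₃ = 1}, i.e., horocycles in the hyperboloid model correspond under τ to the sets h_N(w) = {y ∈ N : y·w = 1} with w = τ(v) on the light cylinder. -/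
open Matrix

theorem tau_dotProduct_tau_sub_one {x v : Fin 3 → ℝ} (hx : x 2 ≠ 0) (hv : v 2 ≠ 0) :
    tau x ⬝ᵥ tau v - 1 = (mink x v + 1) / (x 2 * v 2) := by
  simp only [vec3_dotProduct, tau, mink, cons_val]
  field_simp
  ring

theorem mink_eq_neg_one_iff_tau_dotProduct_tau_eq_one {x v : Fin 3 → ℝ}
    (hx : x 2 ≠ 0) (hv : v 2 ≠ 0) : mink x v = -1 ↔ tau x ⬝ᵥ tau v = 1 := by
  rw [eq_neg_iff_add_eq_zero, ← sub_eq_zero (a := tau x ⬝ᵥ tau v),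
    tau_dotProduct_tau_sub_one hx hv, div_eq_zero_iff, or_iff_left (mul_ne_zero hx hv)]

theorem stmt14_general :
    (∀ x v : Fin 3 → ℝ, x 2 ≠ 0 → v 2 ≠ 0 → (mink x v = -1 ↔ tau x ⬝ᵥ tau v = 1)) ∧
      ∀ (S : Set (Fin 3 → ℝ)) (v : Fin 3 → ℝ), (∀ x ∈ S, x 2 ≠ 0) → v 2 ≠ 0 →
        tau '' {x ∈ S | mink x v = -1} = {y ∈ tau '' S | y ⬝ᵥ tau v = 1} := by
  refine ⟨fun x v => mink_eq_neg_one_iff_tau_dotProduct_tau_eq_one, fun S v hS hv => ?_⟩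
  have sep_eq_inter_preimage :
      {x ∈ S | mink x v = -1} = S ∩ tau ⁻¹' {y | y ⬝ᵥ tau v = 1} :=
    Set.ext fun x => and_congr_right fun hx =>
      mink_eq_neg_one_iff_tau_dotProduct_tau_eq_one (hS x hx) hv
  rw [sep_eq_inter_preimage, Set.image_inter_preimage]
  rfl

/-- For `x, v` with positive third coordinate, `⟨x,v⟩ = −1` iff the
Euclidean inner product of `τ(x)` and `τ(v)` equals `1`. Consequently, for `v ∈ L⁺` the
image under `τ` of the horocycle `h(v) = {x ∈ H : ⟨x,v⟩ = −1}` is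
`{y ∈ τ(H) : y·τ(v) = 1}`. -/
theorem stmt14 :
    (∀ x v : Fin 3 → ℝ, 0 < x 2 → 0 < v 2 →
        (mink x v = -1 ↔ tau x 0 * tau v 0 + tau x 1 * tau v 1 + tau x 2 * tau v 2 = 1)) ∧
      ∀ v : Fin 3 → ℝ, mink v v = 0 → 0 < v 2 →
        tau '' {x | (mink x x = -1 ∧ 0 < x 2) ∧ mink x v = -1} =
          {y ∈ tau '' {x | mink x x = -1 ∧ 0 < x 2} |
            y 0 * tau v 0 + y 1 * tau v 1 + y 2 * tau v 2 = 1} := by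
  simp only [← vec3_dotProduct]
  exact ⟨fun x v hx hv => stmt14_general.1 x v hx.ne' hv.ne',
    fun v _ hv => stmt14_general.2 _ v (fun x hx => hx.2.ne') hv.ne'⟩
end
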